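/- arXiv:1107.2809 — 4 statements merged into one kernel-verified Lean document; each statement's English description precedes it below -/
import Mathlib

section
/- The function d₂(x) = π₂(x) − C₂·Li₂(x) does not change sign on the interval [2^21, 2^25]: for all real x, y with 2^21 ≤ x ≤ y ≤ 2^25, one has d₂(x)·d₂(y) > 0. -/
open Real Filter Set

/-- `Li₂(x) = ∫₂ˣ dt/(log t)²`. -/
noncomputable def Li2 (x : ℝ) : ℝ := ∫ t in (2:ℝ)..x, 1 / (Real.log t) ^ 2

/-- `π₂(x)`: the number of primes `p` with `p+2` also prime and `p+2 ≤ x`. -/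
noncomputable def piTwin (x : ℝ) : ℕ :=
  Nat.card {p : ℕ | p.Prime ∧ (p + 2).Prime ∧ ((p : ℝ) + 2) ≤ x}

/-- The twin prime constant `C₂ = 2·∏_{p prime, p>2} (1 − 1/(p−1)²)`. -/
noncomputable def C2 : ℝ :=
  2 * ∏' p : {p : ℕ // p.Prime ∧ 2 < p}, (1 - 1 / (((p : ℕ) : ℝ) - 1) ^ 2)

/-- `d₂(x) = π₂(x) − C₂·Li₂(x)`. -/
noncomputable def d2 (x : ℝ) : ℝ := (piTwin x : ℝ) - C2 * Li2 x

/-! ## Kernel-friendly computation: a bit sieve for twin primes `6 * k ± 1` -/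

/-- Adds to `c` the number of set bits of `w` (at most `fuel` many are counted). -/
noncomputable def pop (fuel w c : ℕ) : ℕ :=
  Nat.rec (motive := fun _ => ℕ → ℕ → ℕ) (fun _ c => c)
    (fun _ ih w c => Bool.rec (ih (Nat.land w (Nat.sub w 1)) (Nat.succ c)) c (Nat.beq w 0))
    fuel w c

/-- The number with binary ones exactly at the `W / d + 1` first multiples of `d`. -/
noncomputable def rep (d W : ℕ) : ℕ :=
  Nat.div (Nat.sub (Nat.pow 2 (Nat.mul d (Nat.succ (Nat.div W d)))) 1) (Nat.sub (Nat.pow 2 d) 1)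

/-- Ones at all positions `≡ o₁` or `≡ o₂` modulo `d`. -/
noncomputable def twoShift (R o₁ o₂ : ℕ) : ℕ := Nat.lor (Nat.shiftLeft R o₁) (Nat.shiftLeft R o₂)

/-- Mask of the `j < W` for which `d` divides one of `6(K+j) ± 1`, where `d = 6 * e ± 1`. -/
noncomputable def part (K W e d : ℕ) : ℕ :=
  Bool.rec 0
    (twoShift (rep d W) (Nat.mod (Nat.add e (Nat.sub d (Nat.mod K d))) d)
      (Nat.mod (Nat.add (Nat.sub d e) (Nat.sub d (Nat.mod K d))) d))
    (Bool.rec (Nat.beq (Nat.gcd d 5005) 1) true (Nat.ble d 13))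

/-- Contribution of the two moduli `6 * e ± 1`. -/
noncomputable def leaf (K W e : ℕ) : ℕ :=
  Bool.rec 0
    (Bool.rec 0 (Nat.lor (part K W e (Nat.sub (Nat.mul 6 e) 1)) (part K W e (Nat.succ (Nat.mul 6 e))))
      (Nat.ble (Nat.pow (Nat.sub (Nat.mul 6 e) 1) 2) (Nat.mul 6 (Nat.succ (Nat.add K W)))))
    (Nat.ble 1 e)

/-- Union of the masks for `e₀ ≤ e < e₀ + 2 ^ depth`. -/
noncomputable def sieve (K W depth e₀ : ℕ) : ℕ :=
  Nat.rec (motive := fun _ => ℕ → ℕ) (fun e => leaf K W e)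
    (fun t ih e => Nat.lor (ih e) (ih (Nat.add e (Nat.pow 2 t)))) depth e₀

/-- Bit `j` is set only if `6(K+j) ± 1` has no divisor in the sieving range. -/
noncomputable def bits (K W : ℕ) : ℕ :=
  Nat.xor (Nat.sub (Nat.pow 2 W) 1) (Nat.mod (sieve K W 10 0) (Nat.pow 2 W))

/-- `128 * 10^24`. -/
def bigD : ℕ := 128000000000000000000000000

/-- Walks over `fuel` words of 256 bits, checking `C * (L + dL) < cnt * D` at each. -/
noncomputable def chunkLoop (D C dL : ℕ) (k : ℕ → ℕ → Bool) (fuel n cnt L : ℕ) : Bool :=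
  Nat.rec (motive := fun _ => ℕ → ℕ → ℕ → Bool) (fun n cnt _ => k n cnt)
    (fun _ ih n cnt L =>
      Bool.rec false
        (ih (Nat.shiftRight n 256) (pop 256 (Nat.mod n (Nat.pow 2 256)) cnt) (Nat.add L dL))
        (Nat.ble (Nat.succ (Nat.mul C (Nat.add L dL)))
          (Nat.mul cnt D)))
    fuel n cnt L

/-- Lower bound for `10^12 * log (n / 128)` where `n = 128 + r`. -/
noncomputable def mu (r : ℕ) : ℕ :=
  Nat.rec (motive := fun _ => ℕ) 0
    (fun t ih => Nat.add ih (Nat.div 2000000000000 (Nat.add 257 (Nat.mul 2 t)))) r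

/-- Upper bound for `10^12 * 1 / log² (g m)`. -/
noncomputable def fUp (m : ℕ) : ℕ :=
  (fun B => Nat.succ (Nat.div (Nat.pow 10 36) (Nat.mul B B)))
    (Nat.add (Nat.mul (Nat.succ (Nat.div m 64)) 693147180300)
      (mu (Nat.add 64 (Nat.mul 3 (Nat.mod m 64)))))

/-- Trapezoid increment. -/
noncomputable def trap (m L : ℕ) : ℕ :=
  Nat.add L (Nat.mul (Nat.mul 3 (Nat.pow 2 (Nat.div m 64))) (Nat.add (fUp m) (fUp (Nat.succ m))))

/-- Walks over `fuel` blocks. -/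
noncomputable def blockLoop (D C : ℕ) (k : ℕ → ℕ → Bool) (fuel m n cnt L : ℕ) : Bool :=
  Nat.rec (motive := fun _ => ℕ → ℕ → ℕ → ℕ → Bool) (fun _ _ cnt L => k cnt L)
    (fun _ ih m n cnt L =>
      chunkLoop D (Bool.rec 0 C (Nat.ble 1237 m)) (Nat.mul 196608 (fUp m))
        (fun n' cnt' => ih (Nat.succ m) n' cnt' (trap m L))
        (Nat.pow 2 (Nat.sub (Nat.div m 64) 15)) n cnt L)
    fuel m n cnt L

/-- Index of the first 256-bit word of block `m`. -/
noncomputable def chunkIdx (m : ℕ) : ℕ :=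
  Nat.mul (Nat.pow 2 (Nat.sub (Nat.div m 64) 15)) (Nat.add 64 (Nat.mod m 64))

/-- Check of one segment: `nb` blocks starting from block `m`. -/
noncomputable def segCheck (m nb cnt L cnt' L' : ℕ) : Bool :=
  blockLoop bigD 1320340000000 (fun c l => Bool.rec false (Nat.beq l L') (Nat.beq c cnt')) nb m
    (bits (Nat.mul 256 (chunkIdx m)) 131072) cnt L

/-- Pure counting for the two initial segments. -/
noncomputable def cntCheck (K skip fuel cnt cnt' : ℕ) : Bool :=
  chunkLoop 1 0 0 (fun _ c => Nat.beq c cnt') fuel (Nat.shiftRight (bits K 131072) skip) cnt 0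

/-- Trapezoid sum over blocks `m, …, m + fuel - 1`. -/
noncomputable def liLoop (fuel m L : ℕ) : ℕ :=
  Nat.rec (motive := fun _ => ℕ) L (fun t ih => trap (Nat.add m t) ih) fuel

/-! ## Correctness of the sieve -/

theorem bigD_cast : (bigD : ℝ) = 128000000000000 * 1000000000000 := by
  unfold bigD; norm_num

theorem pop_zero (w c : ℕ) : pop 0 w c = c := rfl

theorem pop_succ (f w c : ℕ) :
    pop (f + 1) w c = if w = 0 then c else pop f (w &&& (w - 1)) (c + 1) := by
  show (Bool.rec (pop f (Nat.land w (Nat.sub w 1)) (Nat.succ c)) c (Nat.beq w 0) : ℕ) = _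
  by_cases h : w = 0
  · subst h; rfl
  · have : Nat.beq w 0 = false := by
      rw [Bool.eq_false_iff]; intro h'; exact h (Nat.eq_of_beq_eq_true h')
    rw [this, if_neg h]; rfl

theorem pop_le (B f : ℕ) : ∀ w c : ℕ, w < 2 ^ B →
    pop f w c ≤ c + ((Finset.range B).filter (fun j => w.testBit j = true)).card := by
  induction f with
  | zero => intro w c _; rw [pop_zero]; omega
  | succ f ih =>
    intro w c hw
    rw [pop_succ]
    split_ifs with h
    · omega
    · have hle : w &&& (w - 1) ≤ w - 1 := Nat.and_le_right
      have hlt : w &&& (w - 1) < w := by omega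
      refine (ih _ (c + 1) (by omega)).trans ?_
      have : ((Finset.range B).filter (fun j => (w &&& (w - 1)).testBit j = true)).card <
          ((Finset.range B).filter (fun j => w.testBit j = true)).card := by
        apply Finset.card_lt_card
        rw [Finset.ssubset_iff_subset_ne]
        constructor
        · intro j
          simp only [Finset.mem_filter, Nat.testBit_and, Bool.and_eq_true]
          tauto
        · intro heq
          have : w &&& (w - 1) = w := by
            apply Nat.eq_of_testBit_eq
            intro j
            by_cases hj : j < B
            · have := congrArg (fun s => j ∈ s) heq
              simp only [Finset.mem_filter, Finset.mem_range, hj, true_and, eq_iff_iff] at this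
              rw [Bool.eq_iff_iff]; exact this
            · have hB : 2 ^ B ≤ 2 ^ j := Nat.pow_le_pow_right (by norm_num) (by omega)
              rw [Nat.testBit_lt_two_pow (by omega), Nat.testBit_lt_two_pow (by omega)]
          omega
      omega

theorem rep_eq (d W : ℕ) : rep d W = (2 ^ (d * (W / d + 1)) - 1) / (2 ^ d - 1) := rfl

theorem geom_testBit (d : ℕ) (hd : 0 < d) (m : ℕ) :
    ∀ i < m, ((2 ^ (d * m) - 1) / (2 ^ d - 1)).testBit (d * i) = true := by
  have h2 : 2 ≤ 2 ^ d := by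
    calc 2 = 2 ^ 1 := rfl
      _ ≤ 2 ^ d := Nat.pow_le_pow_right (by norm_num) hd
  induction m with
  | zero => intro i hi; omega
  | succ m ih =>
    intro i hi
    have h1 : 1 ≤ 2 ^ (d * m) := Nat.one_le_two_pow
    have key : (2 ^ (d * (m + 1)) - 1) / (2 ^ d - 1) =
        2 ^ d * ((2 ^ (d * m) - 1) / (2 ^ d - 1)) + 1 := by
      have hdvd : (2 ^ d - 1) ∣ (2 ^ (d * m) - 1) := by
        rw [pow_mul]
        simpa using Nat.sub_dvd_pow_sub_pow (2 ^ d) 1 m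
      obtain ⟨q, hq⟩ := hdvd
      rw [hq, Nat.mul_div_cancel_left _ (by omega)]
      have : 2 ^ (d * (m + 1)) - 1 = (2 ^ d - 1) * (2 ^ d * q + 1) := by
        have e1 : 2 ^ (d * (m + 1)) = 2 ^ d * 2 ^ (d * m) := by rw [mul_add, pow_add]; ring
        have e2 : 2 ^ (d * m) = (2 ^ d - 1) * q + 1 := by omega
        rw [e1, e2]
        obtain ⟨b, hb⟩ : ∃ b, 2 ^ d = b + 1 := ⟨2 ^ d - 1, by omega⟩
        rw [hb, Nat.add_sub_cancel]
        have : (b + 1) * (b * q + 1) = b * ((b + 1) * q + 1) + 1 := by ring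
        omega
      rw [this, Nat.mul_div_cancel_left _ (by omega)]
    rw [key, Nat.testBit_two_pow_mul_add _ (by omega)]
    rcases i with _ | i
    · simp [hd]
    · have : ¬ d * (i + 1) < d := by nlinarith
      rw [if_neg this]
      have e : d * (i + 1) - d = d * i := by rw [mul_add]; omega
      rw [e]
      exact ih i (by omega)

theorem rep_shift (d W o j : ℕ) (hd : 0 < d) (hj : j < W) (h : j % d = o) :
    (Nat.shiftLeft (rep d W) o).testBit j = true := by
  show ((rep d W) <<< o).testBit j = true
  rw [Nat.testBit_shiftLeft]
  have h1 : j = d * (j / d) + o := by rw [← h]; exact (Nat.div_add_mod j d).symm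
  have h2 : j ≥ o := by rw [h1]; exact Nat.le_add_left _ _
  have h3 : j - o = d * (j / d) := by omega
  rw [h3, rep_eq]
  simp only [h2, decide_true, Bool.true_and]
  apply geom_testBit d hd
  have := Nat.div_le_div_right (c := d) hj.le
  omega

theorem bool_or (a b : Bool) : (Bool.rec a true b : Bool) = (b || a) := by cases b <;> rfl
theorem bool_and (a b : Bool) : (Bool.rec false a b : Bool) = (b && a) := by cases b <;> rfl

/-- Which moduli are used. -/
def useful (d : ℕ) : Prop := d ≤ 13 ∨ Nat.gcd d 5005 = 1

theorem part_eq (K W e d : ℕ) (h : useful d) : part K W e d =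
    twoShift (rep d W) ((e + (d - K % d)) % d) (((d - e) + (d - K % d)) % d) := by
  have : (Bool.rec (Nat.beq (Nat.gcd d 5005) 1) true (Nat.ble d 13) : Bool) = true := by
    rw [bool_or, Bool.or_eq_true]
    rcases h with h | h
    · left; exact Nat.ble_eq_true_of_le h
    · right; rw [h]; rfl
  unfold part
  rw [this]; rfl

theorem mod_shift (K j d a : ℕ) (hd : 0 < d) (h : (K + j) % d = a % d) :
    j % d = (a + (d - K % d)) % d := by
  have hK : K % d < d := Nat.mod_lt _ hd
  have h1 : (K + j) ≡ a [MOD d] := h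
  have h2 : K % d + (d - K % d) = d := by omega
  have h3 : j ≡ j + d [MOD d] := by simp [Nat.ModEq]
  have h4 : K % d ≡ K [MOD d] := Nat.mod_modEq _ _
  have h5 : j + d = (K % d + j) + (d - K % d) := by omega
  have h6 : (K % d + j) + (d - K % d) ≡ (K + j) + (d - K % d) [MOD d] :=
    (h4.add_right j).add_right _
  have h7 : (K + j) + (d - K % d) ≡ a + (d - K % d) [MOD d] := h1.add_right _
  rw [h5] at h3
  exact (h3.trans h6).trans h7

theorem part_sound (K W e d j : ℕ) (he : 1 ≤ e) (hu : useful d)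
    (hd : d = 6 * e - 1 ∨ d = 6 * e + 1) (hj : j < W)
    (hdvd : d ∣ 6 * (K + j) - 1 ∨ d ∣ 6 * (K + j) + 1) (hk : 1 ≤ K + j) :
    (part K W e d).testBit j = true := by
  have hd0 : 0 < d := by omega
  have hed : e < d := by omega
  have hcop : Nat.Coprime d 6 := by
    rw [Nat.coprime_comm]
    show Nat.gcd 6 d = 1
    rw [Nat.gcd_rec]
    rcases hd with h | h
    · have : d % 6 = 5 := by omega
      rw [this]; rfl
    · have : d % 6 = 1 := by omega
      rw [this]; rfl
  have key : (K + j) % d = e % d ∨ (K + j) % d = (d - e) % d := by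
    have hz : (d : ℤ) ∣ (K + j : ℤ) - e ∨ (d : ℤ) ∣ (K + j : ℤ) + e := by
      have hcz : IsCoprime (d : ℤ) 6 := by
        have := Nat.isCoprime_iff_coprime.mpr hcop
        exact_mod_cast this
      have h1 : (d : ℤ) ∣ 6 * (K + j : ℤ) - 1 ∨ (d : ℤ) ∣ 6 * (K + j : ℤ) + 1 := by
        rcases hdvd with h | h
        · left
          have := Int.natCast_dvd_natCast.mpr h
          rw [Nat.cast_sub (by omega)] at this
          push_cast at this; exact this
        · right
          have := Int.natCast_dvd_natCast.mpr h
          push_cast at this; exact this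
      have h2 : (d : ℤ) ∣ 6 * (e : ℤ) - 1 ∨ (d : ℤ) ∣ 6 * (e : ℤ) + 1 := by
        rcases hd with h | h
        · left; rw [h, Nat.cast_sub (by omega)]; push_cast; exact dvd_refl _
        · right; rw [h]; push_cast; exact dvd_refl _
      rcases h1 with h1 | h1 <;> rcases h2 with h2 | h2
      · left; apply hcz.dvd_of_dvd_mul_left
        have := dvd_sub h1 h2; ring_nf at this ⊢; exact this
      · right; apply hcz.dvd_of_dvd_mul_left
        have := dvd_add h1 h2; ring_nf at this ⊢; exact this
      · right; apply hcz.dvd_of_dvd_mul_left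
        have := dvd_add h1 h2; ring_nf at this ⊢; exact this
      · left; apply hcz.dvd_of_dvd_mul_left
        have := dvd_sub h1 h2; ring_nf at this ⊢; exact this
    rcases hz with h | h
    · left
      have : (e : ℤ) ≡ ((K + j : ℕ) : ℤ) [ZMOD d] := by
        rw [Int.modEq_iff_dvd]; push_cast; exact h
      exact ((Int.natCast_modEq_iff.mp this).symm)
    · right
      have : ((d - e : ℕ) : ℤ) ≡ ((K + j : ℕ) : ℤ) [ZMOD d] := by
        rw [Int.modEq_iff_dvd, Nat.cast_sub hed.le]; push_cast
        have := dvd_sub h (dvd_refl (d : ℤ))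
        ring_nf at this ⊢; exact this
      exact ((Int.natCast_modEq_iff.mp this).symm)
  rw [part_eq _ _ _ _ hu]
  show ((Nat.shiftLeft _ _) ||| (Nat.shiftLeft _ _)).testBit j = true
  rw [Nat.testBit_or, Bool.or_eq_true]
  rcases key with h | h
  · left
    exact rep_shift _ _ _ _ hd0 hj (mod_shift K j d e hd0 h)
  · right
    exact rep_shift _ _ _ _ hd0 hj (mod_shift K j d _ hd0 h)

theorem leaf_sound (K W e d j : ℕ) (he : 1 ≤ e) (hu : useful d)
    (hd : d = 6 * e - 1 ∨ d = 6 * e + 1) (hj : j < W)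
    (hdvd : d ∣ 6 * (K + j) - 1 ∨ d ∣ 6 * (K + j) + 1) (hk : 1 ≤ K + j)
    (hsq : (6 * e - 1) ^ 2 ≤ 6 * (K + W + 1)) :
    (leaf K W e).testBit j = true := by
  have h1 : Nat.ble 1 e = true := Nat.ble_eq_true_of_le he
  have h2 : Nat.ble (Nat.pow (Nat.sub (Nat.mul 6 e) 1) 2) (Nat.mul 6 (Nat.succ (Nat.add K W))) = true :=
    Nat.ble_eq_true_of_le hsq
  have h3 : leaf K W e = (part K W e (6 * e - 1)) ||| (part K W e (6 * e + 1)) := by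
    unfold leaf; rw [h1, h2]; rfl
  rw [h3, Nat.testBit_or, Bool.or_eq_true]
  have := part_sound K W e d j he hu hd hj hdvd hk
  rcases hd with rfl | rfl
  · exact Or.inl this
  · exact Or.inr this

theorem sieve_sound (K W e j : ℕ) (h : (leaf K W e).testBit j = true) (t : ℕ) :
    ∀ e₀, e₀ ≤ e → e < e₀ + 2 ^ t → (sieve K W t e₀).testBit j = true := by
  induction t with
  | zero =>
    intro e₀ h1 h2
    have : e₀ = e := by simp at h2; omega
    subst this; exact h
  | succ t ih =>
    intro e₀ h1 h2
    have : sieve K W (t + 1) e₀ = sieve K W t e₀ ||| sieve K W t (e₀ + 2 ^ t) := rfl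
    rw [this, Nat.testBit_or, Bool.or_eq_true]
    by_cases h3 : e < e₀ + 2 ^ t
    · exact Or.inl (ih e₀ h1 h3)
    · refine Or.inr (ih _ (by omega) ?_)
      rw [pow_succ] at h2; omega

/-- `6 * k ± 1` is a twin prime pair. -/
def Tw (k : ℕ) : Prop := 1 ≤ k ∧ (6 * k - 1).Prime ∧ (6 * k + 1).Prime

theorem prime_of_sieve (K W j n : ℕ) (hj : j < W) (hk : 1 ≤ K + j)
    (hn : n = 6 * (K + j) - 1 ∨ n = 6 * (K + j) + 1)
    (hbig : K + W ≤ 6000000) (hn6 : 6 < n)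
    (hs : (sieve K W 10 0).testBit j = false) : n.Prime := by
  by_contra hp
  have hn1 : n ≠ 1 := by omega
  set p := n.minFac with hpdef
  have hpp : p.Prime := Nat.minFac_prime hn1
  have hpn : p ∣ n := Nat.minFac_dvd n
  have hsq : p ^ 2 ≤ n := Nat.minFac_sq_le_self (by omega) hp
  have hp2 : ¬ 2 ∣ p := by
    intro h; have := h.trans hpn; omega
  have hp3 : ¬ 3 ∣ p := by
    intro h; have := h.trans hpn; omega
  have hp1 : 2 ≤ p := hpp.two_le
  obtain ⟨e, he, hpe⟩ : ∃ e, 1 ≤ e ∧ (p = 6 * e - 1 ∨ p = 6 * e + 1) := by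
    have h2 : p ≠ 2 := fun h => hp2 (by rw [h])
    have h3 : p ≠ 3 := fun h => hp3 (by rw [h])
    have h4 : p ≠ 4 := fun h => hp2 (by rw [h]; norm_num)
    refine ⟨(p + 1) / 6, ?_, ?_⟩ <;> omega
  have hu : useful p := by
    by_cases h13 : p ≤ 13
    · exact Or.inl h13
    · right
      refine (Nat.Prime.coprime_iff_not_dvd hpp).mpr (fun h => ?_)
      have h' : p ∣ 5 * (7 * (11 * 13)) := h
      rcases (hpp.dvd_mul).mp h' with h | h
      · have := Nat.le_of_dvd (by norm_num) h; omega
      rcases (hpp.dvd_mul).mp h with h | h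
      · have := Nat.le_of_dvd (by norm_num) h; omega
      rcases (hpp.dvd_mul).mp h with h | h
      · have := Nat.le_of_dvd (by norm_num) h; omega
      · have := Nat.le_of_dvd (by norm_num) h; omega
  have hsq2 : (6 * e - 1) ^ 2 ≤ p ^ 2 := Nat.pow_le_pow_left (by omega) 2
  have hnle : n ≤ 6 * (K + W + 1) := by omega
  have hbit := leaf_sound K W e p j he hu hpe hj
    (by rcases hn with h | h <;> rw [h] at hpn <;> tauto) hk (by omega)
  have he2 : e < 0 + 2 ^ 10 := by
    by_contra hcon
    have : (6143 : ℕ) ^ 2 ≤ (6 * e - 1) ^ 2 := Nat.pow_le_pow_left (by omega) 2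
    omega
  have := sieve_sound K W e j hbit 10 0 (by omega) he2
  rw [hs] at this
  exact Bool.noConfusion this

theorem bits_sound (K W j : ℕ) (hbig : K + W ≤ 6000000) (hk : 2 ≤ K + j)
    (h : (bits K W).testBit j = true) : j < W ∧ Tw (K + j) := by
  have e : bits K W = (2 ^ W - 1) ^^^ (sieve K W 10 0 % 2 ^ W) := rfl
  rw [e, Nat.testBit_xor, Nat.testBit_two_pow_sub_one, Nat.testBit_mod_two_pow] at h
  have hj : j < W := by
    by_contra hj
    simp [hj] at h
  have hs : (sieve K W 10 0).testBit j = false := by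
    simpa [hj] using h
  refine ⟨hj, by omega, ?_, ?_⟩
  · exact prime_of_sieve K W j _ hj (by omega) (Or.inl rfl) hbig (by omega) hs
  · exact prime_of_sieve K W j _ hj (by omega) (Or.inr rfl) hbig (by omega) hs

open Classical in
/-- Number of twin pairs `6 * k ± 1` with `k < K`. -/
noncomputable def cntT (K : ℕ) : ℕ := ((Finset.range K).filter Tw).card

theorem cntT_add (c n : ℕ) (hn : ∀ j, n.testBit j = true → Tw (256 * c + j)) (cnt : ℕ)
    (h : cnt ≤ cntT (256 * c)) :
    pop 256 (n % 2 ^ 256) cnt ≤ cntT (256 * (c + 1)) := by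
  classical
  have hw : n % 2 ^ 256 < 2 ^ 256 := Nat.mod_lt _ (by positivity)
  have hn' : ∀ j, (n % 2 ^ 256).testBit j = true → Tw (256 * c + j) := by
    intro j hj
    rw [Nat.testBit_mod_two_pow, Bool.and_eq_true] at hj
    exact hn j hj.2
  generalize n % 2 ^ 256 = w at hw hn' ⊢
  refine (pop_le 256 256 _ cnt hw).trans ?_
  have hmem : ∀ j ∈ (Finset.range 256).filter (fun j => w.testBit j = true),
      j < 256 ∧ w.testBit j = true := by
    intro j hj
    rw [Finset.mem_filter, Finset.mem_range] at hj
    exact hj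
  generalize (Finset.range 256).filter (fun j => w.testBit j = true) = A at hmem
  have : cntT (256 * c) + A.card ≤ cntT (256 * (c + 1)) := by
    unfold cntT
    rw [← Finset.card_map (addLeftEmbedding (256 * c)) (s := A), ← Finset.card_union_of_disjoint]
    · apply Finset.card_le_card
      intro k hk
      simp only [Finset.mem_union, Finset.mem_filter, Finset.mem_range, Finset.mem_map,
        addLeftEmbedding_apply] at hk ⊢
      rcases hk with hk | hk
      · exact ⟨by omega, hk.2⟩
      · obtain ⟨j, hj, hjk⟩ := hk
        have := hmem j hj
        exact ⟨by omega, hjk ▸ hn' j this.2⟩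
    · rw [Finset.disjoint_left]
      intro k hk hk'
      simp only [Finset.mem_filter, Finset.mem_range, Finset.mem_map,
        addLeftEmbedding_apply] at hk hk'
      obtain ⟨j, _, hjk⟩ := hk'
      omega
  omega

theorem finite_twin (x : ℝ) : {p : ℕ | p.Prime ∧ (p + 2).Prime ∧ ((p : ℝ) + 2) ≤ x}.Finite := by
  apply (Set.finite_Iic ⌊x⌋₊).subset
  rintro p ⟨_, _, h⟩
  exact Nat.le_floor (by linarith)

theorem cntT_le_piTwin (K : ℕ) (x : ℝ) (h : 6 * (K : ℝ) ≤ x) : cntT K ≤ piTwin x := by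
  classical
  unfold cntT piTwin
  have hfin := finite_twin x
  rw [Nat.card_coe_set_eq, ← Set.ncard_coe_finset]
  apply Set.ncard_le_ncard_of_injOn (fun k => 6 * k - 1) _ _ hfin
  · intro k hk
    simp only [Finset.coe_filter, Finset.mem_range, Set.mem_ofPred_eq] at hk ⊢
    obtain ⟨h1, h2, h3, h4⟩ := hk
    have e : 6 * k - 1 + 2 = 6 * k + 1 := by omega
    refine ⟨h3, by rw [e]; exact h4, ?_⟩
    have : ((6 * k - 1 : ℕ) : ℝ) + 2 = ((6 * k + 1 : ℕ) : ℝ) := by rw [← e]; push_cast; rfl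
    rw [this]
    have : 6 * k + 1 ≤ 6 * K := by omega
    calc ((6 * k + 1 : ℕ) : ℝ) ≤ ((6 * K : ℕ) : ℝ) := by exact_mod_cast this
      _ ≤ x := by push_cast; exact h
  · intro a ha b hb hab
    simp only [Finset.coe_filter, Finset.mem_range, Set.mem_ofPred_eq] at ha hb
    have := ha.2.1
    have := hb.2.1
    simp only at hab
    omega

theorem cnt_base : 49 ≤ cntT (256 * 1) := by
  classical
  let s : Finset ℕ := {1, 2, 3, 5, 7, 10, 12, 17, 18, 23, 25, 30, 32, 33, 38, 40, 45, 47, 52, 58, 70,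
    72, 77, 87, 95, 100, 103, 107, 110, 135, 137, 138, 143, 147, 170, 172, 175, 177, 182, 192, 205,
    213, 215, 217, 220, 238, 242, 247, 248}
  have hs : s.card = 49 := by decide +kernel
  unfold cntT
  rw [← hs]
  apply Finset.card_le_card
  intro k hk
  rw [Finset.mem_filter, Finset.mem_range]
  revert k
  simp only [s, Finset.forall_mem_insert, Finset.mem_singleton, forall_eq, Tw]
  norm_num

theorem mod_pow_raw (n b : ℕ) : Nat.mod n (Nat.pow 2 b) = n % 2 ^ b := rfl
theorem shr_raw (n b : ℕ) : Nat.shiftRight n b = n >>> b := rfl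
theorem add_raw (n b : ℕ) : Nat.add n b = n + b := rfl

theorem chunkLoop_succ (D C dL : ℕ) (k : ℕ → ℕ → Bool) (fuel n cnt L : ℕ) :
    chunkLoop D C dL k (Nat.succ fuel) n cnt L = (Bool.rec false
        (chunkLoop D C dL k fuel (Nat.shiftRight n 256) (pop 256 (Nat.mod n (Nat.pow 2 256)) cnt)
          (Nat.add L dL))
        (Nat.ble (Nat.succ (Nat.mul C (Nat.add L dL)))
          (Nat.mul cnt D)) : Bool) := rfl

theorem chunkLoop_step (D C dL : ℕ) (k : ℕ → ℕ → Bool) (fuel n cnt L : ℕ)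
    (h : chunkLoop D C dL k (fuel + 1) n cnt L = true) :
    C * (L + dL) + 1 ≤ cnt * D ∧
      chunkLoop D C dL k fuel (n >>> 256) (pop 256 (n % 2 ^ 256) cnt) (L + dL) = true := by
  rw [← Nat.succ_eq_add_one fuel, chunkLoop_succ, bool_and, Bool.and_eq_true, mod_pow_raw,
    shr_raw, add_raw] at h
  exact ⟨Nat.le_of_ble_eq_true h.1, h.2⟩

/-- The real-number content of the check. -/
theorem chunkLoop_sound (D C dL : ℕ) (k : ℕ → ℕ → Bool) (fuel : ℕ) : ∀ c n cnt L : ℕ,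
    chunkLoop D C dL k fuel n cnt L = true →
    (∀ j, n.testBit j = true → Tw (256 * c + j)) → cnt ≤ cntT (256 * c) →
    ∃ n' cnt', k n' cnt' = true ∧ (∀ j, n'.testBit j = true → Tw (256 * (c + fuel) + j)) ∧
      cnt' ≤ cntT (256 * (c + fuel)) ∧
      ∀ f : ℝ → ℝ, (D : ℝ) = 128000000000000 * 1000000000000 → 128000000000000 * f (1536 * c) ≤ L →
        (∀ i < fuel, 128000000000000 * f (1536 * ((c + i + 1 : ℕ) : ℝ)) ≤
          128000000000000 * f (1536 * ((c + i : ℕ) : ℝ)) + dL) →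
        (∀ x y : ℝ, 1536 * (c : ℝ) ≤ x → x ≤ y → f x ≤ f y) →
        ∀ x : ℝ, 1536 * (c : ℝ) ≤ x → x < 1536 * ((c + fuel : ℕ) : ℝ) →
          C * f x < piTwin x * 1000000000000 := by
  induction fuel with
  | zero =>
    intro c n cnt L h hb hc
    refine ⟨n, cnt, h, by simpa using hb, by simpa using hc, ?_⟩
    intro f _ _ _ _ x h1 h2
    simp only [add_zero] at h2
    linarith
  | succ fuel ih =>
    intro c n cnt L h hb hc
    obtain ⟨h1, h2⟩ := chunkLoop_step D C dL k fuel n cnt L h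
    have hb' : ∀ j, (n >>> 256).testBit j = true → Tw (256 * (c + 1) + j) := by
      intro j hj
      rw [Nat.testBit_shiftRight] at hj
      have := hb _ hj
      convert this using 1
      ring
    obtain ⟨n', cnt', hk, hb2, hc2, hf⟩ := ih (c + 1) _ _ _ h2 hb' (cntT_add c n hb cnt hc)
    have e : c + 1 + fuel = c + (fuel + 1) := by ring
    rw [e] at hb2 hc2 hf
    refine ⟨n', cnt', hk, hb2, hc2, ?_⟩
    intro f hD hL hstep hmono x hx1 hx2
    have hL' : 128000000000000 * f (1536 * ((c + 1 : ℕ) : ℝ)) ≤ ((L + dL : ℕ) : ℝ) := by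
      have := hstep 0 (by omega)
      simp only [add_zero] at this
      push_cast at this ⊢
      linarith
    by_cases hx : x < 1536 * ((c + 1 : ℕ) : ℝ)
    · have hfx : f x ≤ f (1536 * ((c + 1 : ℕ) : ℝ)) := hmono _ _ hx1 hx.le
      have hpi : cnt ≤ piTwin x := hc.trans (cntT_le_piTwin _ _ (by push_cast; linarith))
      have hpi' : (cnt : ℝ) ≤ piTwin x := by exact_mod_cast hpi
      have h1' : (C : ℝ) * ((L + dL : ℕ) : ℝ) + 1 ≤ cnt * (128000000000000 * 1000000000000) := by
        have := (Nat.cast_le (α := ℝ)).mpr h1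
        rw [Nat.cast_mul cnt, hD] at this
        push_cast at this ⊢
        exact this
      have hC : (0 : ℝ) ≤ C := Nat.cast_nonneg _
      have : (C : ℝ) * (128000000000000 * f x) ≤ C * ((L + dL : ℕ) : ℝ) := by
        apply mul_le_mul_of_nonneg_left _ hC
        linarith
      have h3 : (cnt : ℝ) * (128000000000000 * 1000000000000) ≤
          piTwin x * (128000000000000 * 1000000000000) :=
        mul_le_mul_of_nonneg_right hpi' (by norm_num)
      generalize (piTwin x : ℝ) = P at *
      generalize (C : ℝ) = C' at *
      generalize f x = y at *
      have h4 : 128000000000000 * (C' * y) < 128000000000000 * (P * 1000000000000) := by linarith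
      linarith
    · push Not at hx
      apply hf f hD hL' _ _ x hx hx2
      · intro i hi
        have := hstep (i + 1) (by omega)
        have e1 : c + 1 + i = c + (i + 1) := by ring
        rw [e1]; exact this
      · intro x y hx hxy
        apply hmono x y _ hxy
        push_cast at hx
        linarith

theorem cntCheck_sound (c skip fuel cnt cnt' : ℕ) 
    (h : cntCheck (256 * c) (256 * skip) fuel cnt cnt' = true)
    (hbig : 256 * c + 131072 ≤ 6000000) (h1 : 1 ≤ c + skip)
    (hcnt : cnt ≤ cntT (256 * (c + skip))) : cnt' ≤ cntT (256 * (c + skip + fuel)) := by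
  obtain ⟨n', cnt2, hk, _, hc2, _⟩ := chunkLoop_sound 1 0 0 _ fuel (c + skip) _ _ _ h (by
    intro j hj
    have hj' : ((bits (256 * c) 131072) >>> (256 * skip)).testBit j = true := hj
    rw [Nat.testBit_shiftRight] at hj'
    have := (bits_sound _ _ _ hbig (by omega) hj').2
    convert this using 1
    ring) hcnt
  have := Nat.eq_of_beq_eq_true hk
  omega

/-! ## Upper bounds for `Li₂` -/

/-- The integrand. -/
noncomputable def lf (t : ℝ) : ℝ := 1 / (Real.log t) ^ 2

theorem log_pos2 {t : ℝ} (h : 2 ≤ t) : 0 < Real.log t := Real.log_pos (by linarith)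

theorem lf_cont : ContinuousOn lf (Set.Ici 2) := by
  unfold lf
  apply ContinuousOn.div continuousOn_const
  · apply ContinuousOn.pow
    apply Real.continuousOn_log.mono
    intro t ht
    have : (2 : ℝ) ≤ t := ht
    simp only [Set.mem_compl_iff, Set.mem_singleton_iff]
    intro h; linarith
  · intro t ht
    exact (pow_pos (log_pos2 ht) 2).ne'

theorem lf_int {a b : ℝ} (ha : 2 ≤ a) (hb : 2 ≤ b) :
    IntervalIntegrable lf MeasureTheory.volume a b := by
  apply ContinuousOn.intervalIntegrable
  apply lf_cont.mono
  intro t ht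
  exact le_trans (le_min ha hb) ht.1

theorem Li2_eq {a b : ℝ} (ha : 2 ≤ a) (hb : 2 ≤ b) : Li2 b = Li2 a + ∫ t in a..b, lf t :=
  (intervalIntegral.integral_add_adjacent_intervals (lf_int le_rfl ha) (lf_int ha hb)).symm

theorem lf_anti {a b : ℝ} (ha : 2 ≤ a) (hab : a ≤ b) : lf b ≤ lf a := by
  unfold lf
  have h1 := log_pos2 ha
  have h2 : Real.log a ≤ Real.log b := Real.log_le_log (by linarith) hab
  apply one_div_le_one_div_of_le (by positivity)
  gcongr

theorem lf_nonneg (t : ℝ) : 0 ≤ lf t := by unfold lf; positivity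

theorem Li2_mono {a b : ℝ} (ha : 2 ≤ a) (hab : a ≤ b) : Li2 a ≤ Li2 b := by
  rw [Li2_eq ha (ha.trans hab)]
  have : 0 ≤ ∫ t in a..b, lf t := intervalIntegral.integral_nonneg hab (fun t _ => lf_nonneg t)
  linarith

theorem Li2_step {a b : ℝ} (ha : 2 ≤ a) (hab : a ≤ b) : Li2 b ≤ Li2 a + (b - a) * lf a := by
  rw [Li2_eq ha (ha.trans hab)]
  have : ∫ t in a..b, lf t ≤ ∫ _t in a..b, lf a :=
    intervalIntegral.integral_mono_on hab (lf_int ha (ha.trans hab)) (by simp)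
      (fun t ht => lf_anti ha ht.1)
  rw [intervalIntegral.integral_const, smul_eq_mul] at this
  linarith

theorem lf_convex {a b u v : ℝ} (ha : 2 ≤ a) (hb : 2 ≤ b) (hu : 0 ≤ u) (hv : 0 ≤ v)
    (huv : u + v = 1) : lf (u * a + v * b) ≤ u * lf a + v * lf b := by
  have hla := log_pos2 ha
  have hlb := log_pos2 hb
  have hconc : u * Real.log a + v * Real.log b ≤ Real.log (u * a + v * b) := by
    have := strictConcaveOn_log_Ioi.concaveOn.2 (x := a) (y := b)
      (show (0 : ℝ) < a by linarith) (show (0 : ℝ) < b by linarith) hu hv huv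
    simpa only [smul_eq_mul] using this
  have hpos : 0 < u * Real.log a + v * Real.log b := by
    rcases hu.eq_or_lt with h | h
    · have : v = 1 := by linarith
      rw [← h, this]; linarith
    · have := mul_pos h hla
      have := mul_nonneg hv hlb.le
      linarith
  have hconv := (convexOn_zpow (𝕜 := ℝ) (-2)).2 (x := Real.log a) (y := Real.log b) hla hlb hu hv huv
  simp only [smul_eq_mul] at hconv
  have e : ∀ y : ℝ, y ^ (-2 : ℤ) = 1 / y ^ 2 := by
    intro y; rw [zpow_neg, one_div]; norm_cast
  rw [e, e, e] at hconv
  unfold lf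
  refine le_trans ?_ hconv
  apply one_div_le_one_div_of_le (by positivity)
  gcongr

theorem Li2_trap {a b : ℝ} (ha : 2 ≤ a) (hab : a < b) :
    Li2 b ≤ Li2 a + (b - a) * (lf a + lf b) / 2 := by
  have hb : 2 ≤ b := ha.trans hab.le
  rw [Li2_eq ha hb]
  have hba : 0 < b - a := by linarith
  set q : ℝ := (lf b - lf a) / (b - a) with hq
  have hle : ∫ t in a..b, lf t ≤ ∫ t in a..b, ((lf a - q * a) + q * t) := by
    apply intervalIntegral.integral_mono_on hab.le (lf_int ha hb)
    · exact (by fun_prop : Continuous fun t : ℝ => (lf a - q * a) + q * t).intervalIntegrable _ _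
    · intro t ht
      have hc := lf_convex ha hb (u := (b - t) / (b - a)) (v := (t - a) / (b - a))
        (div_nonneg (by linarith [ht.2]) hba.le) (div_nonneg (by linarith [ht.1]) hba.le)
        (by field_simp; ring)
      have e1 : (b - t) / (b - a) * a + (t - a) / (b - a) * b = t := by field_simp; ring
      rw [e1] at hc
      refine hc.trans (le_of_eq ?_)
      rw [hq]; field_simp; ring
  have h_integral : ∫ t in a..b, ((lf a - q * a) + q * t) = (b - a) * (lf a + lf b) / 2 := by
    rw [intervalIntegral.integral_add (by simp)
      ((by fun_prop : Continuous fun t : ℝ => q * t).intervalIntegrable _ _),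
      intervalIntegral.integral_const, intervalIntegral.integral_const_mul, integral_id, smul_eq_mul]
    have : q * (b - a) = lf b - lf a := by rw [hq]; field_simp
    have h2 : q * ((b ^ 2 - a ^ 2) / 2) = (lf b - lf a) * (b + a) / 2 := by rw [← this]; ring
    rw [h2]
    have h3 : (b - a) * (lf a - q * a) = (b - a) * lf a - (lf b - lf a) * a := by rw [← this]; ring
    rw [h3]; ring
  linarith

theorem mu_le (r : ℕ) : (mu r : ℝ) ≤ 1000000000000 * Real.log ((128 + r : ℝ) / 128) := by
  induction r with
  | zero => simp [mu]
  | succ t ih =>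
    have e : mu (t + 1) = mu t + 2000000000000 / (257 + 2 * t) := rfl
    have h1 : ((2000000000000 / (257 + 2 * t) : ℕ) : ℝ) ≤
        ((2000000000000 : ℕ) : ℝ) / ((257 + 2 * t : ℕ) : ℝ) := Nat.cast_div_le
    have hn : (0 : ℝ) < 128 + t := by positivity
    have h2 := Real.le_log_one_add_of_nonneg (x := 1 / (128 + t : ℝ)) (by positivity)
    have h3 : 2 * (1 / (128 + t : ℝ)) / (1 / (128 + t : ℝ) + 2) = 2 / (257 + 2 * t) := by
      field_simp; ring
    have h4 : Real.log ((128 + ((t + 1 : ℕ) : ℝ)) / 128) =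
        Real.log ((128 + t : ℝ) / 128) + Real.log (1 + 1 / (128 + t : ℝ)) := by
      rw [← Real.log_mul (by positivity) (by positivity)]
      congr 1
      push_cast
      field_simp
      ring
    rw [e, h4]
    rw [h3] at h2
    push_cast at h1 ⊢
    have h5 : (2000000000000 : ℝ) / (257 + 2 * t) = 1000000000000 * (2 / (257 + 2 * t)) := by ring
    rw [h5] at h1
    linarith

/-- The grid points. -/
noncomputable def gr (m : ℕ) : ℝ := 3 * 2 ^ (m / 64) * (64 + (m % 64 : ℕ)) / 64

theorem gr_ge (m : ℕ) : 3 ≤ gr m := by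
  unfold gr
  have h1 : (1 : ℝ) ≤ 2 ^ (m / 64) := one_le_pow₀ (by norm_num)
  have h2 : (0 : ℝ) ≤ ((m % 64 : ℕ) : ℝ) := Nat.cast_nonneg _
  rw [le_div_iff₀ (by norm_num)]
  nlinarith

theorem gr_succ (m : ℕ) : gr (m + 1) = gr m + 3 * 2 ^ (m / 64) / 64 := by
  unfold gr
  by_cases h : m % 64 = 63
  · have h1 : (m + 1) / 64 = m / 64 + 1 := by omega
    have h2 : (m + 1) % 64 = 0 := by omega
    rw [h1, h2, h, pow_succ]; push_cast; ring
  · have h1 : (m + 1) / 64 = m / 64 := by omega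
    have h2 : (m + 1) % 64 = m % 64 + 1 := by omega
    rw [h1, h2]; push_cast; ring

theorem fUp_ge (m : ℕ) : 1000000000000 * lf (gr m) ≤ (fUp m : ℝ) := by
  set B : ℕ := (m / 64 + 1) * 693147180300 + mu (64 + 3 * (m % 64)) with hB
  have e : fUp m = 10 ^ 36 / (B * B) + 1 := rfl
  have hlog : (B : ℝ) ≤ 1000000000000 * Real.log (gr m) := by
    have h1 : gr m = 2 ^ (m / 64 + 1) * ((128 + ((64 + 3 * (m % 64) : ℕ) : ℝ)) / 128) := by
      unfold gr; push_cast; ring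
    rw [h1, Real.log_mul (by positivity) (by positivity), Real.log_pow, hB]
    have h2 := mu_le (64 + 3 * (m % 64))
    have h3 := Real.log_two_gt_d9
    have h4 : (0 : ℝ) ≤ ((m / 64 + 1 : ℕ) : ℝ) := Nat.cast_nonneg _
    have h5 : ((m / 64 + 1 : ℕ) : ℝ) * 0.6931471803 ≤ ((m / 64 + 1 : ℕ) : ℝ) * Real.log 2 := by
      gcongr
    rw [Nat.cast_add, Nat.cast_mul]
    generalize ((m / 64 + 1 : ℕ) : ℝ) = A at *
    push_cast at *
    linarith
  have hBpos : (0 : ℝ) < B := by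
    have : 0 < B := by rw [hB]; positivity
    exact_mod_cast this
  have h1 : (10 : ℝ) ^ 36 / (B * B) ≤ fUp m := by
    rw [e]
    have := (Nat.lt_floor_add_one ((10 : ℝ) ^ 36 / (B * B))).le
    have h2 : ⌊(10 : ℝ) ^ 36 / (B * B)⌋₊ = 10 ^ 36 / (B * B) := by
      have := Nat.floor_div_eq_div (K := ℝ) (10 ^ 36) (B * B)
      rw [← this]; norm_num
    rw [h2] at this
    push_cast at this ⊢
    exact this
  refine le_trans ?_ h1
  unfold lf
  have hl : 0 < Real.log (gr m) := log_pos2 (by linarith [gr_ge m])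
  rw [mul_one_div, div_le_div_iff₀ (by positivity) (by positivity)]
  have : (B : ℝ) * B ≤ (1000000000000 * Real.log (gr m)) * (1000000000000 * Real.log (gr m)) := by
    gcongr
  nlinarith

theorem trap_sound (m L : ℕ) (h : 128000000000000 * Li2 (gr m) ≤ L) :
    128000000000000 * Li2 (gr (m + 1)) ≤ (trap m L : ℝ) := by
  have e : trap m L = L + (3 * 2 ^ (m / 64)) * (fUp m + fUp (m + 1)) := rfl
  have h1 := fUp_ge m
  have h2 := fUp_ge (m + 1)
  have hp : (0 : ℝ) < 3 * 2 ^ (m / 64) := by positivity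
  have hg := gr_succ m
  have ht := Li2_trap (a := gr m) (b := gr (m + 1)) (by linarith [gr_ge m])
    (by rw [hg]; linarith)
  have hd : gr (m + 1) - gr m = 3 * 2 ^ (m / 64) / 64 := by rw [hg]; ring
  rw [hd] at ht
  rw [e]
  push_cast
  generalize (3 * 2 ^ (m / 64) : ℝ) = w at *
  have h3 : w * (1000000000000 * lf (gr m) + 1000000000000 * lf (gr (m + 1))) ≤
      w * (fUp m + fUp (m + 1)) := by gcongr
  linarith

theorem liLoop_sound (m L : ℕ) (h : 128000000000000 * Li2 (gr m) ≤ L) (t : ℕ) :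
    128000000000000 * Li2 (gr (m + t)) ≤ (liLoop t m L : ℝ) := by
  induction t with
  | zero => exact h
  | succ t ih => exact trap_sound (m + t) _ ih

theorem Li2_three : 128000000000000 * Li2 (gr 0) ≤ ((266496000000000 : ℕ) : ℝ) := by
  have e : gr 0 = 3 := by simp [gr]
  rw [e]
  have h := Li2_step (a := 2) (b := 3) le_rfl (by norm_num)
  have h0 : Li2 2 = 0 := by simp [Li2]
  have h1 : lf 2 ≤ 2.082 := by
    unfold lf
    have := Real.log_two_gt_d9
    rw [div_le_iff₀ (by positivity)]
    nlinarith
  rw [h0] at h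
  norm_num at h ⊢
  norm_num at h1
  linarith

/-! ## Upper bound for `C₂` -/

/-- A sound primality test for small numbers. -/
noncomputable def isP (n : ℕ) : Bool :=
  or (or (Nat.beq n 3) (or (Nat.beq n 5) (Nat.beq n 7)))
    (and (Nat.ble 11 n)
      (or (and (Nat.ble n 120) (Nat.beq (Nat.gcd n (Nat.factorial 10)) 1))
        (and (Nat.ble n 10200) (Nat.beq (Nat.gcd n (Nat.factorial 100)) 1))))

/-- Product of `h n` over the `n₀ ≤ n < n₀ + 2 ^ depth` passing the test. -/
noncomputable def prodTree (h : ℕ → ℕ) (depth n₀ : ℕ) : ℕ :=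
  Nat.rec (motive := fun _ => ℕ → ℕ) (fun n => Bool.rec 1 (h n) (isP n))
    (fun t ih n => Nat.mul (ih n) (ih (Nat.add n (Nat.pow 2 t)))) depth n₀

/-- The check for the upper bound of `C₂`. -/
noncomputable def c2Check (d c : ℕ) : Bool :=
  Nat.ble
    (Nat.mul 2000000000000 (prodTree (fun n => Nat.sub (Nat.pow (Nat.sub n 1) 2) 1) d 0))
    (Nat.mul c (prodTree (fun n => Nat.pow (Nat.sub n 1) 2) d 0))

theorem c2_ok : c2Check 13 1320340000000 = true := by decide +kernel

theorem prime_of_gcd (n k : ℕ) (h1 : 1 < n) (h2 : n < (k + 1) ^ 2)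
    (h : Nat.gcd n (Nat.factorial k) = 1) : n.Prime := by
  by_contra hp
  have hsq : n.minFac ^ 2 ≤ n := Nat.minFac_sq_le_self (by omega) hp
  have hlt : n.minFac < k + 1 := lt_of_pow_lt_pow_left₀ 2 (by omega) (hsq.trans_lt h2)
  have hpp : n.minFac.Prime := Nat.minFac_prime (by omega)
  have : n.minFac ∣ Nat.gcd n (Nat.factorial k) :=
    Nat.dvd_gcd (Nat.minFac_dvd n) (Nat.dvd_factorial hpp.pos (by omega))
  rw [h] at this
  exact hpp.one_lt.ne' (Nat.dvd_one.mp this)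

theorem isP_sound (n : ℕ) (h : isP n = true) : n.Prime ∧ 2 < n := by
  unfold isP at h
  simp only [Bool.or_eq_true, Bool.and_eq_true, Nat.beq_eq, Nat.ble_eq] at h
  rcases h with (h | h | h) | ⟨h1, ⟨h2, h3⟩ | ⟨h2, h3⟩⟩
  · subst h; norm_num
  · subst h; norm_num
  · subst h; norm_num
  · exact ⟨prime_of_gcd n 10 (by omega) (by norm_num; omega) h3, by omega⟩
  · exact ⟨prime_of_gcd n 100 (by omega) (by norm_num; omega) h3, by omega⟩

theorem prodTree_eq (h : ℕ → ℕ) (d : ℕ) : ∀ n₀, prodTree h d n₀ =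
    ∏ n ∈ (Finset.Ico n₀ (n₀ + 2 ^ d)).filter (fun n => isP n = true), h n := by
  induction d with
  | zero =>
    intro n₀
    have e : prodTree h 0 n₀ = (Bool.rec 1 (h n₀) (isP n₀) : ℕ) := rfl
    rw [e, pow_zero, Nat.Ico_succ_singleton, Finset.prod_filter, Finset.prod_singleton]
    cases isP n₀ <;> simp
  | succ d ih =>
    intro n₀
    have e : prodTree h (d + 1) n₀ = prodTree h d n₀ * prodTree h d (n₀ + 2 ^ d) := rfl
    rw [e, ih, ih, Finset.prod_filter, Finset.prod_filter, Finset.prod_filter]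
    have e2 : n₀ + 2 ^ (d + 1) = n₀ + 2 ^ d + 2 ^ d := by rw [pow_succ]; ring
    rw [e2, Finset.prod_Ico_consecutive _ (Nat.le_add_right _ _) (Nat.le_add_right _ _)]

/-- The factors of the product. -/
noncomputable def fac (p : ℕ) : ℝ := 1 - 1 / ((p : ℝ) - 1) ^ 2

theorem fac_mem (p : ℕ) (h : 2 < p) : 0 ≤ fac p ∧ fac p ≤ 1 := by
  unfold fac
  have h1 : (3 : ℝ) ≤ p := by exact_mod_cast h
  have h2 : (1 : ℝ) ≤ ((p : ℝ) - 1) ^ 2 := by nlinarith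
  have h3 : 1 / ((p : ℝ) - 1) ^ 2 ≤ 1 := by
    rw [div_le_one (by linarith)]; exact h2
  have h4 : 0 ≤ 1 / ((p : ℝ) - 1) ^ 2 := by positivity
  constructor <;> linarith

theorem fac_multipliable : Multipliable (fun p : {p : ℕ // p.Prime ∧ 2 < p} => fac p) := by
  have hs : Summable (fun p : {p : ℕ // p.Prime ∧ 2 < p} => -(1 / (((p : ℕ) : ℝ) - 1) ^ 2)) := by
    apply Summable.neg
    have h1 : Summable (fun n : ℕ => 1 / (n : ℝ) ^ 2) := Real.summable_one_div_nat_pow.mpr (by norm_num)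
    have h2 := h1.comp_injective (i := fun p : {p : ℕ // p.Prime ∧ 2 < p} => (p : ℕ) - 1) (by
      rintro ⟨a, ha⟩ ⟨b, hb⟩ hab
      simp only at hab
      apply Subtype.ext
      show a = b
      omega)
    convert h2 using 2 with p
    have := p.2.2
    simp only [Function.comp]
    rw [Nat.cast_sub (by omega)]; norm_num
  have := Real.multipliable_one_add_of_summable hs
  simpa only [fac, sub_eq_add_neg] using this

theorem C2_le_prod (s : Finset {p : ℕ // p.Prime ∧ 2 < p}) : C2 ≤ 2 * ∏ p ∈ s, fac p := by
  have h := fac_multipliable.hasProd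
  have : ∏' p : {p : ℕ // p.Prime ∧ 2 < p}, fac p ≤ ∏ p ∈ s, fac p := by
    apply le_of_tendsto h
    apply (Filter.eventually_ge_atTop s).mono
    intro t ht
    exact Finset.prod_le_prod_of_subset_of_le_one ht (fun i _ => (fac_mem i i.2.2).1)
      (fun i _ _ => (fac_mem i i.2.2).2)
  unfold C2
  unfold fac at this ⊢
  linarith

theorem c2Check_sound (d c : ℕ) (h : c2Check d c = true) : 1000000000000 * C2 ≤ c := by
  have hc := Nat.le_of_ble_eq_true h
  rw [prodTree_eq, prodTree_eq] at hc
  set F := (Finset.Ico 0 (0 + 2 ^ d)).filter (fun n => isP n = true) with hF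
  have hP : ∀ p ∈ F, p.Prime ∧ 2 < p := fun p hp => isP_sound p (Finset.mem_filter.mp hp).2
  have h1 := C2_le_prod (F.subtype (fun p => p.Prime ∧ 2 < p))
  rw [Finset.prod_subtype_of_mem fac hP] at h1
  have h2 : ∏ p ∈ F, fac p = (∏ p ∈ F, (((p - 1) ^ 2 - 1 : ℕ) : ℝ)) / ∏ p ∈ F, (((p - 1) ^ 2 : ℕ) : ℝ) := by
    rw [← Finset.prod_div_distrib]
    apply Finset.prod_congr rfl
    intro p hp
    have h3 := (hP p hp).2
    have h4 : 1 ≤ (p - 1) ^ 2 := Nat.one_le_pow _ _ (by omega)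
    have h5 : ((p - 1 : ℕ) : ℝ) = (p : ℝ) - 1 := by rw [Nat.cast_sub (by omega)]; norm_num
    have h6 : (0 : ℝ) < (p : ℝ) - 1 := by rw [← h5]; exact_mod_cast (by omega : 0 < p - 1)
    rw [Nat.cast_sub h4, Nat.cast_pow, h5, Nat.cast_one]
    unfold fac
    field_simp
  have hpos : 0 < ∏ p ∈ F, (((p - 1) ^ 2 : ℕ) : ℝ) := by
    apply Finset.prod_pos
    intro p hp
    have h3 := (hP p hp).2
    have h4 : 0 < (p - 1) ^ 2 := Nat.pow_pos (by omega)
    exact_mod_cast h4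
  have hc' : (2000000000000 : ℝ) * (∏ p ∈ F, (((p - 1) ^ 2 - 1 : ℕ) : ℝ))
      ≤ c * ∏ p ∈ F, (((p - 1) ^ 2 : ℕ) : ℝ) := by
    have := (Nat.cast_le (α := ℝ)).mpr hc
    rw [← Nat.cast_prod, ← Nat.cast_prod]
    have h7 : ((2000000000000 : ℕ) : ℝ) = 2000000000000 := by norm_num
    rw [← h7, ← Nat.cast_mul, ← Nat.cast_mul]
    exact this
  rw [h2] at h1
  have h8 : 2000000000000 * ((∏ p ∈ F, (((p - 1) ^ 2 - 1 : ℕ) : ℝ)) / ∏ p ∈ F, (((p - 1) ^ 2 : ℕ) : ℝ)) ≤ c := by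
    rw [← mul_div_assoc, div_le_iff₀ hpos]; exact hc'
  linarith

theorem C2_le : 1000000000000 * C2 ≤ 1320340000000 := by
  have h := c2Check_sound 13 1320340000000 c2_ok
  rw [Nat.cast_ofNat] at h
  exact h

/-! ## Soundness of the block loop -/

theorem chunkIdx_eq (m : ℕ) : chunkIdx m = 2 ^ (m / 64 - 15) * (64 + m % 64) := rfl

theorem gr_chunkIdx (m : ℕ) (hm : 960 ≤ m) : gr m = 1536 * (chunkIdx m : ℝ) := by
  rw [chunkIdx_eq]
  unfold gr
  obtain ⟨t, ht⟩ : ∃ t, m / 64 = t + 15 := ⟨m / 64 - 15, by omega⟩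
  rw [ht, Nat.add_sub_cancel, pow_add]
  push_cast
  ring

theorem chunkIdx_succ (m : ℕ) (hm : 960 ≤ m) :
    chunkIdx (m + 1) = chunkIdx m + 2 ^ (m / 64 - 15) := by
  rw [chunkIdx_eq, chunkIdx_eq]
  by_cases h : m % 64 = 63
  · have h1 : (m + 1) / 64 - 15 = (m / 64 - 15) + 1 := by omega
    have h2 : (m + 1) % 64 = 0 := by omega
    rw [h1, h2, h, pow_succ]; ring
  · have h1 : (m + 1) / 64 = m / 64 := by omega
    have h2 : (m + 1) % 64 = m % 64 + 1 := by omega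
    rw [h1, h2]; ring

theorem gr_mono_succ (m : ℕ) : gr m ≤ gr (m + 1) := by
  rw [gr_succ]
  have : (0 : ℝ) ≤ 3 * 2 ^ (m / 64) / 64 := by positivity
  linarith

theorem gr_mono : Monotone gr := monotone_nat_of_le_succ gr_mono_succ

theorem blockLoop_succ (D C : ℕ) (k : ℕ → ℕ → Bool) (fuel m n cnt L : ℕ) :
    blockLoop D C k (fuel + 1) m n cnt L =
      chunkLoop D (Bool.rec 0 C (Nat.ble 1237 m)) (Nat.mul 196608 (fUp m))
        (fun n' cnt' => blockLoop D C k fuel (m + 1) n' cnt' (trap m L))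
        (Nat.pow 2 (Nat.sub (Nat.div m 64) 15)) n cnt L := rfl

theorem blockLoop_sound (D C : ℕ) (hD : (D : ℝ) = 128000000000000 * 1000000000000)
    (k : ℕ → ℕ → Bool) (fuel : ℕ) : ∀ m n cnt L : ℕ, 960 ≤ m →
    blockLoop D C k fuel m n cnt L = true →
    (∀ j, n.testBit j = true → Tw (256 * chunkIdx m + j)) →
    cnt ≤ cntT (256 * chunkIdx m) →
    128000000000000 * Li2 (gr m) ≤ (L : ℝ) →
    ∃ cnt' L' : ℕ, k cnt' L' = true ∧ cnt' ≤ cntT (256 * chunkIdx (m + fuel)) ∧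
      128000000000000 * Li2 (gr (m + fuel)) ≤ (L' : ℝ) ∧
      ∀ x : ℝ, gr m ≤ x → x < gr (m + fuel) → gr 1237 ≤ x →
        (C : ℝ) * Li2 x < (piTwin x : ℝ) * 1000000000000 := by
  induction fuel with
  | zero =>
    intro m n cnt L _ h _ hcnt hL
    refine ⟨cnt, L, h, hcnt, hL, ?_⟩
    intro x h1 h2
    exact absurd (h1.trans_lt h2) (lt_irrefl _)
  | succ fuel ih =>
    intro m n cnt L hm h hn hcnt hL
    rw [blockLoop_succ] at h
    obtain ⟨n', cnt', hk, hn', hcnt', hf⟩ := chunkLoop_sound _ _ _ _ _ (chunkIdx m) n cnt L h hn hcnt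
    have e : chunkIdx m + Nat.pow 2 (Nat.sub (Nat.div m 64) 15) = chunkIdx (m + 1) :=
      (chunkIdx_succ m hm).symm
    rw [e] at hn' hcnt' hf
    have hL' := trap_sound m L hL
    obtain ⟨cnt2, L2, a1, a2, a3, a4⟩ := ih (m + 1) n' cnt' (trap m L) (by omega) hk hn' hcnt' hL'
    have e2 : m + 1 + fuel = m + (fuel + 1) := by omega
    rw [e2] at a2 a3 a4
    refine ⟨cnt2, L2, a1, a2, a3, ?_⟩
    intro x hx1 hx2 hx3
    rcases lt_or_ge x (gr (m + 1)) with hlt | hge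
    · have hm2 : 1237 ≤ m := by
        by_contra hcon
        have : gr (m + 1) ≤ gr 1237 := gr_mono (by omega)
        linarith
      have hC : (Bool.rec 0 C (Nat.ble 1237 m) : ℕ) = C := by
        rw [Nat.ble_eq_true_of_le hm2]
      rw [hC] at hf
      have g0 := gr_chunkIdx m hm
      have g1 := gr_chunkIdx (m + 1) (by omega)
      have g3 := gr_ge m
      refine hf Li2 hD ?_ ?_ ?_ x ?_ ?_
      · rw [← g0]; exact hL
      · intro i _
        have h0 : gr m ≤ 1536 * ((chunkIdx m + i : ℕ) : ℝ) := by
          rw [g0]; push_cast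
          have : (0 : ℝ) ≤ (i : ℝ) := Nat.cast_nonneg _
          linarith
        have h1 : (1536 : ℝ) * ((chunkIdx m + i + 1 : ℕ) : ℝ) =
            1536 * ((chunkIdx m + i : ℕ) : ℝ) + 1536 := by push_cast; ring
        rw [h1]
        have h2 := Li2_step (a := 1536 * ((chunkIdx m + i : ℕ) : ℝ))
          (b := 1536 * ((chunkIdx m + i : ℕ) : ℝ) + 1536) (by linarith) (by linarith)
        have h3 := lf_anti (by linarith) h0
        have h4 := fUp_ge m
        have h5 : ((Nat.mul 196608 (fUp m) : ℕ) : ℝ) = 196608 * (fUp m : ℝ) := by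
          rw [Nat.mul_eq, Nat.cast_mul]; norm_num
        rw [h5]
        linarith
      · intro x y hx hxy
        rw [← g0] at hx
        exact Li2_mono (by linarith) hxy
      · rw [← g0]; exact hx1
      · rw [← g1]; exact hlt
    · exact a4 x hge hx2 hx3

/-- The invariant carried along the segments. -/
def SegInv (m cnt L : ℕ) : Prop :=
  (cnt ≤ cntT (256 * chunkIdx m) ∧ 128000000000000 * Li2 (gr m) ≤ (L : ℝ)) ∧
    ∀ x : ℝ, gr 1237 ≤ x → x < gr m → (1320340000000 : ℕ) * Li2 x < (piTwin x : ℝ) * 1000000000000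

theorem beq_and {c l c' l' : ℕ} (h : (Bool.rec false (Nat.beq l l') (Nat.beq c c') : Bool) = true) :
    c = c' ∧ l = l' := by
  cases h1 : Nat.beq c c' with
  | false => rw [h1] at h; cases h
  | true =>
    rw [h1] at h
    exact ⟨Nat.eq_of_beq_eq_true h1, Nat.eq_of_beq_eq_true h⟩

theorem segCheck_unf (m nb cnt L cnt' L' : ℕ) : segCheck m nb cnt L cnt' L' =
  blockLoop bigD 1320340000000 (fun c l => Bool.rec false (Nat.beq l L') (Nat.beq c cnt')) nb m
    (bits (Nat.mul 256 (chunkIdx m)) 131072) cnt L := by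
  unfold segCheck
  exact Eq.refl _

theorem segCheck_sound {m nb cnt L cnt' L' : ℕ} (h : segCheck m nb cnt L cnt' L' = true)
    (hm : 1216 ≤ m) (hm' : m ≤ 1492) (hi : SegInv m cnt L) : SegInv (m + nb) cnt' L' := by
  rw [segCheck_unf] at h
  have hb : 256 * chunkIdx m + 131072 ≤ 6000000 := by
    rw [chunkIdx_eq]
    rcases (by omega : m / 64 ≤ 22 ∨ m / 64 = 23) with h1 | h1
    · have h2 : 2 ^ (m / 64 - 15) ≤ 2 ^ 7 := Nat.pow_le_pow_right (by norm_num) (by omega)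
      have h3 : 2 ^ (m / 64 - 15) * (64 + m % 64) ≤ 2 ^ 7 * 127 :=
        Nat.mul_le_mul h2 (by omega)
      omega
    · rw [h1]; omega
  have hc : 1 ≤ chunkIdx m := by
    rw [chunkIdx_eq]
    exact Nat.mul_pos (Nat.pow_pos (by norm_num)) (by omega)
  obtain ⟨c2, l2, a1, a2, a3, a4⟩ := blockLoop_sound bigD 1320340000000 bigD_cast _ nb m _ cnt L
    (by omega) h
    (fun j hj => (bits_sound (256 * chunkIdx m) 131072 j hb (by omega) hj).2) hi.1.1 hi.1.2
  obtain ⟨e1, e2⟩ := beq_and a1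
  subst e1 e2
  refine ⟨⟨a2, a3⟩, ?_⟩
  intro x hx hx2
  rcases lt_or_ge x (gr m) with hlt | hge
  · exact hi.2 x hx hlt
  · exact a4 x hge hx2 hx

/-! ## The computations -/

theorem cnt_0 : cntCheck 0 256 511 49 6666 = true := by
  decide +kernel
theorem cnt_1 : cntCheck 131072 0 512 6666 12088 = true := by
  decide +kernel
theorem li_0 : liLoop 1216 0 266496000000000 = 1170796732485541050 := by
  decide +kernel
theorem seg_2 : segCheck 1216 32 12088 1170796732485541050 17113 1650675472285375674 = true := by
  decide +kernel
theorem seg_3 : segCheck 1248 32 17113 1650675472285375674 21807 2108760830257732794 = true := by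
  decide +kernel
theorem seg_4 : segCheck 1280 16 21807 2108760830257732794 26482 2551604525754817722 = true := by
  decide +kernel
theorem seg_5 : segCheck 1296 16 26482 2551604525754817722 30923 2982844167704878266 = true := by
  decide +kernel
theorem seg_6 : segCheck 1312 16 30923 2982844167704878266 35204 3404779863272660154 = true := by
  decide +kernel
theorem seg_7 : segCheck 1328 16 35204 3404779863272660154 39529 3818988874047495354 = true := by
  decide +kernel
theorem seg_8 : segCheck 1344 8 39529 3818988874047495354 43662 4226616437936299194 = true := by
  decide +kernel
theorem seg_9 : segCheck 1352 8 43662 4226616437936299194 47902 4628527227014028474 = true := by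
  decide +kernel
theorem seg_10 : segCheck 1360 8 47902 4628527227014028474 52062 5025397323659025594 = true := by
  decide +kernel
theorem seg_11 : segCheck 1368 8 52062 5025397323659025594 56088 5417768263562370234 = true := by
  decide +kernel
theorem seg_12 : segCheck 1376 8 56088 5417768263562370234 60140 5806082844304678074 = true := by
  decide +kernel
theorem seg_13 : segCheck 1384 8 60140 5806082844304678074 64081 6190709369676831930 = true := by
  decide +kernel
theorem seg_14 : segCheck 1392 8 64081 6190709369676831930 67996 6571958627847183546 = true := by
  decide +kernel
theorem seg_15 : segCheck 1400 8 67996 6571958627847183546 71870 6950096119655636154 = true := by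
  decide +kernel
theorem seg_16 : segCheck 1408 4 71870 6950096119655636154 75689 7325351836203162810 = true := by
  decide +kernel
theorem seg_17 : segCheck 1412 4 75689 7325351836203162810 79561 7697924728113405114 = true := by
  decide +kernel
theorem seg_18 : segCheck 1416 4 79561 7697924728113405114 83357 8067990353407712442 = true := by
  decide +kernel
theorem seg_19 : segCheck 1420 4 83357 8067990353407712442 87232 8435704091419942074 = true := by
  decide +kernel
theorem seg_20 : segCheck 1424 4 87232 8435704091419942074 90966 8801204358057630906 = true := by
  decide +kernel
theorem seg_21 : segCheck 1428 4 90966 8801204358057630906 94748 9164615179963800762 = true := by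
  decide +kernel
theorem seg_22 : segCheck 1432 4 94748 9164615179963800762 98497 9526048278310100154 = true := by
  decide +kernel
theorem seg_23 : segCheck 1436 4 98497 9526048278310100154 102219 9885604773290646714 = true := by
  decide +kernel
theorem seg_24 : segCheck 1440 4 102219 9885604773290646714 105880 10243376591042583738 = true := by
  decide +kernel
theorem seg_25 : segCheck 1444 4 105880 10243376591042583738 109522 10599447635127770298 = true := by
  decide +kernel
theorem seg_26 : segCheck 1448 4 109522 10599447635127770298 113184 10953894769157545146 = true := by
  decide +kernel
theorem seg_27 : segCheck 1452 4 113184 10953894769157545146 116786 11306788647151672506 = true := by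
  decide +kernel
theorem seg_28 : segCheck 1456 4 116786 11306788647151672506 120402 11658194419703946426 = true := by
  decide +kernel
theorem seg_29 : segCheck 1460 4 120402 11658194419703946426 124064 12008172338201042106 = true := by
  decide +kernel
theorem seg_30 : segCheck 1464 4 124064 12008172338201042106 127685 12356778274786188474 = true := by
  decide +kernel
theorem seg_31 : segCheck 1468 4 127685 12356778274786188474 131252 12704064167756504250 = true := by
  decide +kernel
theorem seg_32 : segCheck 1472 2 131252 12704064167756504250 134826 13050079102309309626 = true := by
  decide +kernel
theorem seg_33 : segCheck 1474 2 134826 13050079102309309626 138366 13394867565128654010 = true := by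
  decide +kernel
theorem seg_34 : segCheck 1476 2 138366 13394867565128654010 141820 13738471868797885626 = true := by
  decide +kernel
theorem seg_35 : segCheck 1478 2 141820 13738471868797885626 145308 14080931691038579898 = true := by
  decide +kernel
theorem seg_36 : segCheck 1480 2 145308 14080931691038579898 148887 14422284307595074746 = true := by
  decide +kernel
theorem seg_37 : segCheck 1482 2 148887 14422284307595074746 152323 14762564798820719802 = true := by
  decide +kernel
theorem seg_38 : segCheck 1484 2 152323 14762564798820719802 155898 15101806233640049850 = true := by
  decide +kernel
theorem seg_39 : segCheck 1486 2 155898 15101806233640049850 159386 15440039833554459834 = true := by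
  decide +kernel
theorem seg_40 : segCheck 1488 2 159386 15440039833554459834 162901 15777295119635782842 = true := by
  decide +kernel
theorem seg_41 : segCheck 1490 2 162901 15777295119635782842 166278 16113600044596534458 = true := by
  decide +kernel
theorem seg_42 : segCheck 1492 2 166278 16113600044596534458 169764 16448981111396441274 = true := by
  decide +kernel

theorem inv_start : SegInv 1216 12088 1170796732485541050 := by
  have hc : chunkIdx 1216 = 1024 := by rw [chunkIdx_eq]; norm_num
  have c0 := cntCheck_sound 0 1 511 49 6666 cnt_0 (by norm_num) (by norm_num) cnt_base
  have c1 := cntCheck_sound 512 0 512 6666 12088 cnt_1 (by norm_num) (by norm_num) c0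
  refine ⟨⟨?_, ?_⟩, ?_⟩
  · rw [hc]; exact c1
  · have h := liLoop_sound 0 266496000000000 Li2_three 1216
    rw [li_0, Nat.zero_add] at h
    exact h
  · intro x h1 h2
    have : gr 1216 ≤ gr 1237 := gr_mono (by norm_num)
    linarith

theorem inv_end : SegInv 1494 169764 16448981111396441274 := by
  have h := inv_start
  replace h := segCheck_sound seg_2 (by norm_num) (by norm_num) h
  replace h := segCheck_sound seg_3 (by norm_num) (by norm_num) h
  replace h := segCheck_sound seg_4 (by norm_num) (by norm_num) h
  replace h := segCheck_sound seg_5 (by norm_num) (by norm_num) h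
  replace h := segCheck_sound seg_6 (by norm_num) (by norm_num) h
  replace h := segCheck_sound seg_7 (by norm_num) (by norm_num) h
  replace h := segCheck_sound seg_8 (by norm_num) (by norm_num) h
  replace h := segCheck_sound seg_9 (by norm_num) (by norm_num) h
  replace h := segCheck_sound seg_10 (by norm_num) (by norm_num) h
  replace h := segCheck_sound seg_11 (by norm_num) (by norm_num) h
  replace h := segCheck_sound seg_12 (by norm_num) (by norm_num) h
  replace h := segCheck_sound seg_13 (by norm_num) (by norm_num) h
  replace h := segCheck_sound seg_14 (by norm_num) (by norm_num) h
  replace h := segCheck_sound seg_15 (by norm_num) (by norm_num) h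
  replace h := segCheck_sound seg_16 (by norm_num) (by norm_num) h
  replace h := segCheck_sound seg_17 (by norm_num) (by norm_num) h
  replace h := segCheck_sound seg_18 (by norm_num) (by norm_num) h
  replace h := segCheck_sound seg_19 (by norm_num) (by norm_num) h
  replace h := segCheck_sound seg_20 (by norm_num) (by norm_num) h
  replace h := segCheck_sound seg_21 (by norm_num) (by norm_num) h
  replace h := segCheck_sound seg_22 (by norm_num) (by norm_num) h
  replace h := segCheck_sound seg_23 (by norm_num) (by norm_num) h
  replace h := segCheck_sound seg_24 (by norm_num) (by norm_num) h
  replace h := segCheck_sound seg_25 (by norm_num) (by norm_num) h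
  replace h := segCheck_sound seg_26 (by norm_num) (by norm_num) h
  replace h := segCheck_sound seg_27 (by norm_num) (by norm_num) h
  replace h := segCheck_sound seg_28 (by norm_num) (by norm_num) h
  replace h := segCheck_sound seg_29 (by norm_num) (by norm_num) h
  replace h := segCheck_sound seg_30 (by norm_num) (by norm_num) h
  replace h := segCheck_sound seg_31 (by norm_num) (by norm_num) h
  replace h := segCheck_sound seg_32 (by norm_num) (by norm_num) h
  replace h := segCheck_sound seg_33 (by norm_num) (by norm_num) h
  replace h := segCheck_sound seg_34 (by norm_num) (by norm_num) h
  replace h := segCheck_sound seg_35 (by norm_num) (by norm_num) h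
  replace h := segCheck_sound seg_36 (by norm_num) (by norm_num) h
  replace h := segCheck_sound seg_37 (by norm_num) (by norm_num) h
  replace h := segCheck_sound seg_38 (by norm_num) (by norm_num) h
  replace h := segCheck_sound seg_39 (by norm_num) (by norm_num) h
  replace h := segCheck_sound seg_40 (by norm_num) (by norm_num) h
  replace h := segCheck_sound seg_41 (by norm_num) (by norm_num) h
  replace h := segCheck_sound seg_42 (by norm_num) (by norm_num) h
  exact h

theorem d2_pos (x : ℝ) (h1 : 2 ^ 21 ≤ x) (h2 : x ≤ 2 ^ 25) : 0 < d2 x := by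
  have e1 : gr 1237 = 2088960 := by unfold gr; norm_num
  have e2 : gr 1494 = 33816576 := by unfold gr; norm_num
  have h := inv_end.2 x (by rw [e1]; norm_num at h1; linarith)
    (by rw [e2]; norm_num at h2; linarith)
  rw [Nat.cast_ofNat] at h
  have hL : 0 ≤ Li2 x := by
    have h0 : Li2 2 = 0 := by simp [Li2]
    rw [← h0]
    exact Li2_mono le_rfl (by norm_num at h1; linarith)
  have hC := mul_le_mul_of_nonneg_right C2_le hL
  unfold d2
  linarith

/-- `d₂` does not change sign on `[2^21, 2^25]`. -/
theorem d2_no_sign_change_21_25 :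
    ∀ x y : ℝ, 2 ^ 21 ≤ x → x ≤ y → y ≤ 2 ^ 25 → d2 x * d2 y > 0 := by
  intro x y hx hxy hy
  exact mul_pos (d2_pos x hx (hxy.trans hy)) (d2_pos y (hx.trans hxy) hy)
end

section
/- For every real x > 1, the Cauchy principal value li(x) exists and li(x) = γ + log(log x) + Σ_{n=1}^∞ (log x)ⁿ/(n·n!), where the series on the right converges absolutely. -/
open Real Filter Set

noncomputable def liE (u : ℝ) : ℝ :=
  ∑' n : ℕ, u ^ (n + 1) / (((n : ℝ) + 1) * (Nat.factorial (n + 1) : ℝ))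

lemma liE_summable_abs (u : ℝ) : Summable (fun n : ℕ =>
      |u ^ (n + 1) / (((n : ℝ) + 1) * (Nat.factorial (n + 1) : ℝ))|) := by
  have h := (summable_nat_add_iff 1).2 (Real.summable_pow_div_factorial |u|)
  refine Summable.of_nonneg_of_le (fun n => abs_nonneg _) (fun n => ?_) h
  rw [abs_div, abs_pow, abs_of_nonneg (by positivity : (0:ℝ) ≤ ((n : ℝ) + 1) * (Nat.factorial (n + 1) : ℝ))]
  have h1 : (0:ℝ) < (Nat.factorial (n + 1) : ℝ) := by positivity
  gcongr
  nlinarith [(Nat.cast_nonneg n : (0:ℝ) ≤ n)]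

lemma exp_tsum_shift (y : ℝ) : ∑' n : ℕ, y ^ (n+1) / (Nat.factorial (n + 1) : ℝ) = Real.exp y - 1 := by
  have h := (Real.summable_pow_div_factorial y).tsum_eq_zero_add
  rw [Real.exp_eq_exp_ℝ, NormedSpace.exp_eq_tsum_div]
  simp only []
  rw [h]
  simp

lemma liE_hasDerivAt (y : ℝ) :
    HasDerivAt liE (∑' n : ℕ, y ^ n / (Nat.factorial (n + 1) : ℝ)) y := by
  have hu : Summable (fun n : ℕ => (|y|+1) ^ n / (Nat.factorial n : ℝ)) :=
    Real.summable_pow_div_factorial _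
  refine hasDerivAt_tsum_of_isPreconnected (t := Metric.ball 0 (|y|+1)) (y₀ := y) hu Metric.isOpen_ball
    (convex_ball _ _).isPreconnected (g := fun (n : ℕ) u => u ^ (n + 1) / (((n : ℝ) + 1) * (Nat.factorial (n + 1) : ℝ)))
    (g' := fun (n : ℕ) u => u ^ n / (Nat.factorial (n + 1) : ℝ)) ?_ ?_ ?_ (liE_summable_abs y).of_abs ?_
  · intro n z _
    have h := (hasDerivAt_pow (n+1) z).div_const (((n : ℝ) + 1) * (Nat.factorial (n + 1) : ℝ))
    refine h.congr_deriv ?_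
    have h1 : (Nat.factorial (n + 1) : ℝ) ≠ 0 := by positivity
    have h2 : ((n : ℝ) + 1) ≠ 0 := by positivity
    push_cast
    field_simp
  · intro n z hz
    rw [mem_ball_zero_iff, Real.norm_eq_abs] at hz
    rw [Real.norm_eq_abs, abs_div, abs_pow, Nat.abs_cast]
    have := Nat.factorial_le (Nat.le_succ n)
    gcongr
  · simp
  · simp

lemma liE_hasDerivAt' {y : ℝ} (hy : y ≠ 0) : HasDerivAt liE ((Real.exp y - 1) / y) y := by
  convert liE_hasDerivAt y using 1
  rw [← exp_tsum_shift, ← tsum_div_const]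
  congr 1; ext n
  have h1 : (Nat.factorial (n + 1) : ℝ) ≠ 0 := by positivity
  field_simp
  ring

lemma liE_continuous : Continuous liE :=
  continuous_iff_continuousAt.2 fun y => (liE_hasDerivAt y).continuousAt

lemma liE_zero : liE 0 = 0 := by simp [liE]

lemma li_integral_log_exp :
    ∫ t in Ioi (0:ℝ), Real.log t * Real.exp (-t) = -Real.eulerMascheroniConstant := by
  have h1 := Complex.hasDerivAt_GammaIntegral (s := 1) (by simp)
  have h2 := Complex.hasDerivAt_Gamma_one
  have hop : IsOpen {s : ℂ | 0 < s.re} := Complex.continuous_re.isOpen_preimage _ isOpen_Ioi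
  have h3 : HasDerivAt Complex.GammaIntegral _ 1 := h2.congr_of_eventuallyEq (by
    filter_upwards [hop.mem_nhds (show (1:ℂ) ∈ {s : ℂ | 0 < s.re} by simp)] with a ha
    exact (Complex.Gamma_eq_integral ha).symm)
  have h4 := h1.unique h3
  simp only [sub_self, Complex.cpow_zero, one_mul] at h4
  have h5 : ∫ t in Ioi (0:ℝ), ((Real.log t * Real.exp (-t) : ℝ) : ℂ) = -(Real.eulerMascheroniConstant : ℂ) := by
    rw [← h4]; simp
  rw [integral_complex_ofReal] at h5
  exact_mod_cast h5

lemma li_integrable_log_exp :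
    MeasureTheory.IntegrableOn (fun t : ℝ => Real.log t * Real.exp (-t)) (Ioi 0) := by
  by_contra h
  have := MeasureTheory.integral_undef h
  rw [li_integral_log_exp] at this
  linarith [Real.one_half_lt_eulerMascheroniConstant]

lemma li_tendsto_top :
    Tendsto (fun u : ℝ => Real.log u + liE (-u)) atTop (nhds (-Real.eulerMascheroniConstant)) := by
  set H : ℝ → ℝ := fun t => (1 - Real.exp (-t)) * Real.log t + liE (-t) with hH
  have hd : ∀ t ∈ Ioi (0:ℝ), HasDerivAt H (Real.log t * Real.exp (-t)) t := by
    intro t ht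
    have ht0 : t ≠ 0 := ne_of_gt ht
    have e1 : HasDerivAt (fun t : ℝ => 1 - Real.exp (-t)) (Real.exp (-t)) t := by
      have := ((hasDerivAt_neg t).exp).const_sub 1
      simpa using this
    have e2 : HasDerivAt (fun t : ℝ => liE (-t)) (-((Real.exp (-t) - 1) / (-t))) t := by
      have := (liE_hasDerivAt' (neg_ne_zero.2 ht0)).comp t (hasDerivAt_neg t)
      rw [mul_neg_one] at this
      exact this
    refine HasDerivAt.congr_deriv (f := H) ((e1.mul (Real.hasDerivAt_log ht0)).add e2) ?_
    field_simp
    ring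
  have hc : ContinuousWithinAt H (Ici 0) 0 := by
    have a1 : ContinuousWithinAt (fun t : ℝ => (1 - Real.exp (-t)) * Real.log t) (Ici 0) 0 := by
      have hz : Tendsto (fun t : ℝ => |t * Real.log t|) (nhdsWithin 0 (Ici 0)) (nhds 0) := by
        have := (Real.continuous_mul_log.abs.tendsto 0).mono_left (nhdsWithin_le_nhds (s := Ici 0))
        simpa using this
      unfold ContinuousWithinAt
      simp only [Real.log_zero, mul_zero]
      refine squeeze_zero_norm' ?_ hz
      filter_upwards [self_mem_nhdsWithin] with t ht
      rw [Real.norm_eq_abs, abs_mul, abs_mul]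
      have b1 := Real.add_one_le_exp (-t)
      have b2 : Real.exp (-t) ≤ 1 := Real.exp_le_one_iff.2 (by simpa using ht)
      gcongr ?_ * _
      rw [abs_of_nonneg (by linarith), abs_of_nonneg (show (0:ℝ) ≤ t from ht)]
      linarith
    exact a1.add (liE_continuous.comp continuous_neg).continuousWithinAt
  have hH0 : H 0 = 0 := by simp [hH, liE_zero]
  have hl := MeasureTheory.tendsto_limUnder_of_hasDerivAt_of_integrableOn_Ioi hd li_integrable_log_exp
  have hi := MeasureTheory.integral_Ioi_of_hasDerivAt_of_tendsto hc hd li_integrable_log_exp hl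
  rw [li_integral_log_exp, hH0, sub_zero] at hi
  rw [← hi] at hl
  have hz : Tendsto (fun t : ℝ => Real.exp (-t) * Real.log t) atTop (nhds 0) := by
    refine squeeze_zero_norm' ?_ (Real.tendsto_pow_mul_exp_neg_atTop_nhds_zero 1)
    filter_upwards [eventually_ge_atTop 1] with t ht
    rw [Real.norm_eq_abs, abs_mul, abs_of_pos (Real.exp_pos _), abs_of_nonneg (Real.log_nonneg ht),
      mul_comm, pow_one]
    gcongr
    exact Real.log_le_self (by linarith)
  have := hl.add hz
  rw [add_zero] at this
  refine this.congr fun t => ?_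
  simp only [hH]; ring

noncomputable def liF (t : ℝ) : ℝ := Real.log (Real.log t) + liE (Real.log t)

lemma liF_hasDerivAt {t : ℝ} (h0 : 0 < t) (h1 : t ≠ 1) : HasDerivAt liF (1 / Real.log t) t := by
  have hl : Real.log t ≠ 0 := Real.log_ne_zero_of_pos_of_ne_one h0 h1
  have d := Real.hasDerivAt_log h0.ne'
  have e2 := (liE_hasDerivAt' hl).comp t d
  rw [Real.exp_log h0] at e2
  refine HasDerivAt.congr_deriv (f := liF) ((d.log hl).add e2) ?_
  field_simp
  ring

lemma liF_tendsto_zero : Tendsto liF (nhdsWithin 0 (Ioi 0)) (nhds (-Real.eulerMascheroniConstant)) := by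
  have := li_tendsto_top.comp (tendsto_neg_atBot_atTop.comp Real.tendsto_log_nhdsGT_zero)
  refine this.congr fun t => ?_
  simp [liF, Real.log_neg_eq_log]

lemma li_int_left {b : ℝ} (h0 : 0 < b) (h1 : b < 1) :
    ∫ t in (0:ℝ)..b, 1 / Real.log t = liF b + Real.eulerMascheroniConstant := by
  rw [← sub_neg_eq_add]
  refine intervalIntegral.integral_eq_sub_of_hasDerivAt_of_tendsto h0
    (fun t ht => liF_hasDerivAt ht.1 (ht.2.trans h1).ne) ?_ liF_tendsto_zero
    ((liF_hasDerivAt h0 h1.ne).continuousAt.tendsto.mono_left nhdsWithin_le_nhds)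
  apply ContinuousOn.intervalIntegrable
  rw [uIcc_of_le h0.le]
  intro t ht
  apply ContinuousAt.continuousWithinAt
  rcases ht.1.eq_or_lt with rfl | h
  · rw [continuousAt_iff_punctured_nhds]
    simp only [Real.log_zero, div_zero, one_div]
    exact tendsto_inv_atBot_zero.comp Real.tendsto_log_nhdsNE_zero
  · exact continuousAt_const.div (Real.continuousAt_log h.ne')
      (Real.log_ne_zero_of_pos_of_ne_one h (ht.2.trans_lt h1).ne)

lemma li_int_right {a x : ℝ} (h1 : 1 < a) (hx : 1 < x) :
    ∫ t in a..x, 1 / Real.log t = liF x - liF a := by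
  have hm : ∀ t ∈ uIcc a x, 1 < t := fun t ht => lt_of_lt_of_le (lt_min h1 hx) ht.1
  refine intervalIntegral.integral_eq_sub_of_hasDerivAt
    (fun t ht => liF_hasDerivAt (zero_lt_one.trans (hm t ht)) (hm t ht).ne') ?_
  apply ContinuousOn.intervalIntegrable
  intro t ht
  have := hm t ht
  exact (continuousAt_const.div (Real.continuousAt_log (by linarith))
      (Real.log_pos this).ne').continuousWithinAt

lemma li_L : Tendsto (fun t : ℝ => Real.log (Real.log t) - Real.log (t - 1))
    (nhdsWithin 1 {1}ᶜ) (nhds 0) := by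
  have h := (Real.hasDerivAt_log one_ne_zero).tendsto_slope
  rw [inv_one] at h
  have h2 := ((Real.continuousAt_log one_ne_zero).tendsto.comp h)
  rw [Real.log_one] at h2
  refine h2.congr' ?_
  have hp : ∀ᶠ t : ℝ in nhdsWithin 1 {1}ᶜ, 0 < t := nhdsWithin_le_nhds (lt_mem_nhds one_pos)
  filter_upwards [self_mem_nhdsWithin, hp] with t ht h0
  have ht1 : t ≠ 1 := ht
  simp only [Function.comp, slope_def_field, Real.log_one, sub_zero]
  rw [Real.log_div (Real.log_ne_zero_of_pos_of_ne_one h0 ht1) (sub_ne_zero.2 ht1)]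

lemma li_diff : Tendsto (fun ε : ℝ => liF (1 - ε) - liF (1 + ε)) (nhdsWithin 0 (Ioi 0)) (nhds 0) := by
  have c1 : Tendsto (fun ε : ℝ => 1 - ε) (nhdsWithin 0 (Ioi 0)) (nhds 1) := by
    have : Tendsto (fun ε : ℝ => 1 - ε) (nhds 0) (nhds (1 - 0)) := by
      exact (continuous_const.sub continuous_id).tendsto 0
    rw [sub_zero] at this
    exact this.mono_left nhdsWithin_le_nhds
  have c2 : Tendsto (fun ε : ℝ => 1 + ε) (nhdsWithin 0 (Ioi 0)) (nhds 1) := by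
    have : Tendsto (fun ε : ℝ => 1 + ε) (nhds 0) (nhds (1 + 0)) := by
      exact (continuous_const.add continuous_id).tendsto 0
    rw [add_zero] at this
    exact this.mono_left nhdsWithin_le_nhds
  have d1 := li_L.comp (tendsto_nhdsWithin_iff.2 ⟨c1, by
    filter_upwards [self_mem_nhdsWithin] with e he
    have : (0:ℝ) < e := he
    simp [this.ne']⟩)
  have d2 := li_L.comp (tendsto_nhdsWithin_iff.2 ⟨c2, by
    filter_upwards [self_mem_nhdsWithin] with e he
    have : (0:ℝ) < e := he
    simp [this.ne']⟩)
  have hE : ContinuousAt (fun t => liE (Real.log t)) 1 :=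
    liE_continuous.continuousAt.comp (Real.continuousAt_log one_ne_zero)
  have e1 := hE.tendsto.comp c1
  have e2 := hE.tendsto.comp c2
  have := (d1.sub d2).add (e1.sub e2)
  simp only [sub_self, add_zero] at this
  refine this.congr fun e => ?_
  have q1 : (1:ℝ) - e - 1 = -e := by ring
  have q2 : (1:ℝ) + e - 1 = e := by ring
  simp only [Function.comp, liF, q1, q2, Real.log_neg_eq_log]
  ring

/-- For every real `x > 1`, the Cauchy principal value `li(x)` exists and equals
`γ + log(log x) + Σ_{n=1}^∞ (log x)ⁿ/(n·n!)`, the series converging absolutely. -/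
theorem li_eq_series (x : ℝ) (hx : 1 < x) :
    Summable (fun n : ℕ =>
      |Real.log x ^ (n + 1) / (((n : ℝ) + 1) * (Nat.factorial (n + 1) : ℝ))|) ∧
    Tendsto
      (fun ε : ℝ =>
        (∫ t in (0:ℝ)..(1 - ε), 1 / Real.log t) + ∫ t in (1 + ε)..x, 1 / Real.log t)
      (nhdsWithin 0 (Set.Ioi 0))
      (nhds (Real.eulerMascheroniConstant + Real.log (Real.log x) +
        ∑' n : ℕ, Real.log x ^ (n + 1) / (((n : ℝ) + 1) * (Nat.factorial (n + 1) : ℝ)))) := by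
  refine ⟨liE_summable_abs _, ?_⟩
  have h := li_diff.add_const (Real.eulerMascheroniConstant + liF x)
  have e : Real.eulerMascheroniConstant + Real.log (Real.log x) +
        ∑' n : ℕ, Real.log x ^ (n + 1) / (((n : ℝ) + 1) * (Nat.factorial (n + 1) : ℝ))
      = 0 + (Real.eulerMascheroniConstant + liF x) := by
    simp only [liF, liE]; ring
  rw [e]
  refine h.congr' ?_
  filter_upwards [Ioo_mem_nhdsGT (zero_lt_one : (0:ℝ) < 1)] with ε hε
  rw [li_int_left (by linarith [hε.2]) (by linarith [hε.1]), li_int_right (by linarith [hε.1]) hx]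
  ring
end

section
/- There exists a unique real number μ > 1 such that li(μ) = 0 (the Ramanujan–Soldner constant), and it satisfies 1.4513 < μ < 1.4514. -/
open Real Filter Set

/-- `IsLi x L` means the Cauchy principal value `li(x) = v.p. ∫₀ˣ dt/log t` exists and
equals `L`. -/
def IsLi (x L : ℝ) : Prop :=
  Tendsto
    (fun ε : ℝ =>
      (∫ t in (0:ℝ)..(1 - ε), 1 / Real.log t) + ∫ t in (1 + ε)..x, 1 / Real.log t)
    (nhdsWithin 0 (Set.Ioi 0)) (nhds L)

open MeasureTheory

/-- The regularised integrand. -/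
noncomputable def gg (t : ℝ) : ℝ := 1 / Real.log t - 1 / (t - 1)

lemma gg_meas : Measurable gg := by unfold gg; fun_prop

lemma gg_bound {t : ℝ} (ht : 0 < t) : 0 ≤ gg t ∧ gg t ≤ 1 := by
  unfold gg
  rcases lt_trichotomy t 1 with h | h | h
  · have h1 := Real.log_le_sub_one_of_pos ht
    have h2 := Real.one_sub_inv_le_log_of_pos ht
    have hl : Real.log t < 0 := Real.log_neg ht h
    have h3 : 1 / (t - 1) ≤ 1 / Real.log t := by
      apply one_div_le_one_div_of_neg_of_le (by linarith) h1
    have h4 : 1 / Real.log t ≤ 1 / (1 - t⁻¹) :=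
      one_div_le_one_div_of_neg_of_le hl h2
    have h5 : 1 / (1 - t⁻¹) = 1 / (t - 1) + 1 := by
      have : t - 1 ≠ 0 := by linarith
      have h7 : 1 - t⁻¹ = (t - 1) / t := by field_simp
      rw [h7]; field_simp; ring
    constructor <;> linarith
  · subst h; simp
  · have h1 := Real.log_le_sub_one_of_pos ht
    have h2 := Real.one_sub_inv_le_log_of_pos ht
    have hl : 0 < Real.log t := Real.log_pos h
    have h3 : 1 / (t - 1) ≤ 1 / Real.log t := one_div_le_one_div_of_le hl h1
    have h7 : 1 - t⁻¹ = (t - 1) / t := by field_simp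
    have h8 : 0 < 1 - t⁻¹ := by rw [h7]; apply div_pos <;> linarith
    have h4 : 1 / Real.log t ≤ 1 / (1 - t⁻¹) := one_div_le_one_div_of_le h8 h2
    have h5 : 1 / (1 - t⁻¹) = 1 / (t - 1) + 1 := by
      have : t - 1 ≠ 0 := by linarith
      rw [h7]; field_simp; ring
    constructor <;> linarith

lemma gg_int {a b : ℝ} (ha : 0 ≤ a) (hb : 0 ≤ b) : IntervalIntegrable gg volume a b := by
  rw [intervalIntegrable_iff]
  apply Measure.integrableOn_of_bounded (M := 1)
  · simp [uIoc]
  · exact gg_meas.aestronglyMeasurable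
  · refine (ae_restrict_iff' measurableSet_uIoc).2 (ae_of_all _ ?_)
    intro t ht
    have : 0 < t := lt_of_le_of_lt (le_min ha hb) ht.1
    have := gg_bound this
    rw [Real.norm_eq_abs, abs_le]; constructor <;> linarith

/-- The logarithmic integral. -/
noncomputable def FF (x : ℝ) : ℝ := Real.log (x - 1) + ∫ t in (0:ℝ)..x, gg t

lemma inv_int {a b : ℝ} (h : (1:ℝ) ∉ uIcc a b) :
    IntervalIntegrable (fun t : ℝ => 1 / (t - 1)) volume a b := by
  apply ContinuousOn.intervalIntegrable
  apply ContinuousOn.div continuousOn_const (by fun_prop)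
  intro t ht h0
  apply h
  rwa [show (1:ℝ) = t by linarith]

lemma inv_val {a b : ℝ} (h : (1:ℝ) ∉ uIcc a b) :
    ∫ t in a..b, 1 / (t - 1) = Real.log (b - 1) - Real.log (a - 1) := by
  apply intervalIntegral.integral_eq_sub_of_hasDerivAt (f := fun t => Real.log (t - 1))
  · intro t ht
    apply HasDerivAt.log ((hasDerivAt_id t).sub_const 1)
    intro h0
    apply h
    simp at h0
    rwa [show (1:ℝ) = t by linarith]
  · exact inv_int h

lemma inv_log_val {a b : ℝ} (ha : 0 ≤ a) (hb : 0 ≤ b) (h : (1:ℝ) ∉ uIcc a b) :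
    ∫ t in a..b, 1 / Real.log t
      = (∫ t in a..b, gg t) + (Real.log (b - 1) - Real.log (a - 1)) := by
  rw [← inv_val h, ← intervalIntegral.integral_add (gg_int ha hb) (inv_int h)]
  congr 1; ext t; simp [gg]

lemma isLi_FF {x : ℝ} (hx : 1 < x) : IsLi x (FF x) := by
  unfold IsLi
  have key : ∀ᶠ ε in nhdsWithin (0:ℝ) (Ioi 0),
      FF x - (∫ t in (1 - ε)..(1 + ε), gg t) =
      (∫ t in (0:ℝ)..(1 - ε), 1 / Real.log t) + ∫ t in (1 + ε)..x, 1 / Real.log t := by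
    have : Ioo (0:ℝ) (min 1 (x - 1)) ∈ nhdsWithin (0:ℝ) (Ioi 0) :=
      Ioo_mem_nhdsGT (lt_min one_pos (by linarith))
    filter_upwards [this] with ε hε
    obtain ⟨h0, h1⟩ := hε
    have h2 := lt_of_lt_of_le h1 (min_le_left _ _)
    have h3 := lt_of_lt_of_le h1 (min_le_right _ _)
    rw [inv_log_val le_rfl (by linarith), inv_log_val (by linarith) (by linarith)]
    · have e1 := intervalIntegral.integral_add_adjacent_intervals
        (gg_int (le_refl 0) (show 0 ≤ 1 - ε by linarith))
        (gg_int (show 0 ≤ 1 - ε by linarith) (show 0 ≤ 1 + ε by linarith))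
      have e2 := intervalIntegral.integral_add_adjacent_intervals
        (gg_int (le_refl 0) (show 0 ≤ 1 + ε by linarith))
        (gg_int (show 0 ≤ 1 + ε by linarith) (show 0 ≤ x by linarith))
      have e3 : Real.log (1 - ε - 1) = Real.log ε := by
        rw [show 1 - ε - 1 = -ε by ring, Real.log_neg_eq_log]
      have e4 : Real.log (0 - 1) = 0 := by simp
      have e5 : (1 + ε - 1) = ε := by ring
      unfold FF
      rw [e3, e4, e5]
      linarith
    · rw [uIcc_of_le (by linarith)]; intro h; linarith [h.1]
    · rw [uIcc_of_le (by linarith)]; intro h; linarith [h.2]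
  refine Tendsto.congr' key ?_
  have : Tendsto (fun ε : ℝ => ∫ t in (1 - ε)..(1 + ε), gg t) (nhdsWithin 0 (Ioi 0)) (nhds 0) := by
    have ht : Tendsto (fun ε : ℝ => 2 * ε) (nhdsWithin 0 (Ioi 0)) (nhds 0) := by
      have : Tendsto (fun ε : ℝ => 2 * ε) (nhds 0) (nhds (2 * 0)) :=
        (continuous_const.mul continuous_id).tendsto 0
      simp only [mul_zero] at this
      exact this.mono_left nhdsWithin_le_nhds
    refine squeeze_zero_norm' ?_ ht
    filter_upwards [Ioo_mem_nhdsGT (one_pos : (0:ℝ) < 1)] with ε hε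
    have := intervalIntegral.norm_integral_le_of_norm_le_const (a := 1 - ε) (b := 1 + ε)
      (C := 1) (f := gg) ?_
    · rw [abs_of_nonneg (by linarith [hε.1])] at this
      linarith
    · intro t ht
      rw [uIoc_of_le (by linarith [hε.1])] at ht
      have := gg_bound (show 0 < t by linarith [ht.1, hε.2])
      rw [Real.norm_eq_abs, abs_le]; constructor <;> linarith
  simpa using tendsto_const_nhds.sub this

lemma FF_mono {x y : ℝ} (hx : 1 < x) (hy : x < y) : FF x < FF y := by
  have e := intervalIntegral.integral_add_adjacent_intervals
        (gg_int (le_refl 0) (show 0 ≤ x by linarith))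
        (gg_int (show 0 ≤ x by linarith) (show 0 ≤ y by linarith))
  have h1 : 0 ≤ ∫ t in x..y, gg t :=
    intervalIntegral.integral_nonneg hy.le
      (fun t ht => (gg_bound (by linarith [ht.1])).1)
  have h2 : Real.log (x - 1) < Real.log (y - 1) := Real.log_lt_log (by linarith) (by linarith)
  unfold FF; linarith

lemma FF_cont : ContinuousOn FF (Icc 1.4513 1.4514) := by
  unfold FF
  apply ContinuousOn.add
  · apply ContinuousOn.log (by fun_prop)
    intro t ht h
    have := ht.1
    norm_num at this; linarith
  · have h := intervalIntegral.continuousOn_primitive_interval (μ := volume) (f := gg)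
      (a := 0) (b := 1.4514) (by
        have := (gg_int (le_refl 0) (show (0:ℝ) ≤ 1.4514 by norm_num))
        rw [uIcc_of_le (by norm_num), integrableOn_Icc_iff_integrableOn_Ioc]
        rwa [intervalIntegrable_iff_integrableOn_Ioc_of_le (by norm_num)] at this)
    apply h.mono
    rw [uIcc_of_le (by norm_num)]
    apply Icc_subset_Icc <;> norm_num

lemma pade_mono (a b c : ℝ) (ha : -1 < a) (D D' : ℝ → ℝ)
    (hD : ∀ s, HasDerivAt D (D' s) s) (hpos : ∀ s ∈ Icc a b, 0 < D s)
    (hq : ∀ s ∈ Icc a b, 0 ≤ c * (D s ^ 2 - (1 + s) * (D s - s * D' s))) :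
    MonotoneOn (fun s => c * (Real.log (1 + s) - s / D s)) (Icc a b) := by
  have hd : ∀ s ∈ Icc a b, HasDerivAt (fun s => c * (Real.log (1 + s) - s / D s))
      (c * (1 / (1 + s) - (1 * D s - s * D' s) / D s ^ 2)) s := by
    intro s hs
    have h1 : 0 < 1 + s := by linarith [hs.1]
    apply HasDerivAt.const_mul
    apply HasDerivAt.sub
    · exact HasDerivAt.log ((hasDerivAt_id s).const_add 1) h1.ne'
    · exact (hasDerivAt_id s).div (hD s) (hpos s hs).ne'
  apply monotoneOn_of_deriv_nonneg (convex_Icc a b)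
  · exact fun s hs => (hd s hs).continuousAt.continuousWithinAt
  · exact fun s hs => (hd s (interior_subset hs)).differentiableAt.differentiableWithinAt
  · intro s hs
    have hs := interior_subset hs
    rw [(hd s hs).deriv]
    have h1 : 0 < 1 + s := by linarith [hs.1]
    have h2 := hpos s hs
    have : c * (1 / (1 + s) - (1 * D s - s * D' s) / D s ^ 2)
        = (c * (D s ^ 2 - (1 + s) * (D s - s * D' s))) / ((1 + s) * D s ^ 2) := by
      field_simp
    rw [this]
    exact div_nonneg (hq s hs) (by positivity)

lemma gg_up {s : ℝ} (h0 : 0 < s) (h1 : s ≤ 1/2) :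
    gg (1 + s) ≤ 1/2 - s/12 + s^2/24 - 19/720*s^3 + 3/160*s^4 := by
  have pos : ∀ s ∈ Icc (0:ℝ) (1/2), 0 < 1 + (s/2 - s^2/12 + s^3/24 - 19/720*s^4 + 3/160*s^5) := by
    rintro s ⟨h0, h1⟩
    have : s^2 ≤ s * (1/2) := by nlinarith
    have : s^4 ≤ s^3 := pow_le_pow_of_le_one h0 (by linarith) (by norm_num)
    have : 0 ≤ s^3 := by positivity
    have : 0 ≤ s^5 := by positivity
    linarith
  have := pade_mono 0 (1/2) 1 (by norm_num)
    (fun s => 1 + (s/2 - s^2/12 + s^3/24 - 19/720*s^4 + 3/160*s^5))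
    (fun s => 1/2 - s/6 + s^2/8 - 19/180*s^3 + 3/32*s^4) ?_ pos ?_
  · have h := this ⟨le_rfl, by norm_num⟩ ⟨h0.le, h1⟩ h0.le
    simp only [one_mul, add_zero, Real.log_one, zero_div, sub_zero] at h
    have hp := pos s ⟨h0.le, h1⟩
    have hl : 0 < s / (1 + (s/2 - s^2/12 + s^3/24 - 19/720*s^4 + 3/160*s^5)) := div_pos h0 hp
    have h3 := one_div_le_one_div_of_le hl (sub_nonneg.1 h)
    unfold gg
    rw [one_div_div] at h3
    have : (1 + (s/2 - s^2/12 + s^3/24 - 19/720*s^4 + 3/160*s^5)) / s - 1 / (1 + s - 1)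
      = 1/2 - s/12 + s^2/24 - 19/720*s^3 + 3/160*s^4 := by
      rw [add_sub_cancel_left]; field_simp; ring
    linarith
  · intro s
    have h2 := (((((hasDerivAt_id s).div_const 2).sub ((hasDerivAt_pow 2 s).div_const 12)).add
      ((hasDerivAt_pow 3 s).div_const 24)).sub ((hasDerivAt_pow 4 s).const_mul (19/720))).add
      ((hasDerivAt_pow 5 s).const_mul (3/160))
    refine HasDerivAt.congr_deriv (h2.const_add 1) ?_
    norm_num; ring
  · rintro s ⟨h0, h1⟩
    have : 1 * ((1 + (s/2 - s^2/12 + s^3/24 - 19/720*s^4 + 3/160*s^5)) ^ 2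
      - (1 + s) * ((1 + (s/2 - s^2/12 + s^3/24 - 19/720*s^4 + 3/160*s^5))
      - s * (1/2 - s/6 + s^2/8 - 19/180*s^3 + 3/32*s^4)))
      = s^6 * ((863/8640 - 23/4320 * s) + s^2*(1171/518400 - 19/19200*s) + 9/25600*s^4) := by ring
    rw [this]
    have : 0 ≤ 863/8640 - 23/4320 * s := by linarith
    have : 0 ≤ 1171/518400 - 19/19200*s := by linarith
    positivity

lemma gg_lo {s : ℝ} (h0 : 0 < s) (h1 : s ≤ 1/2) :
    1/2 - s/12 + s^2/24 - 19/720*s^3 + 1/100*s^4 ≤ gg (1 + s) := by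
  have pos : ∀ s ∈ Icc (0:ℝ) (1/2), 0 < 1 + (s/2 - s^2/12 + s^3/24 - 19/720*s^4 + 1/100*s^5) := by
    rintro s ⟨h0, h1⟩
    have : s^2 ≤ s * (1/2) := by nlinarith
    have : s^4 ≤ s^3 := pow_le_pow_of_le_one h0 (by linarith) (by norm_num)
    have : 0 ≤ s^3 := by positivity
    have : 0 ≤ s^5 := by positivity
    linarith
  have := pade_mono 0 (1/2) (-1) (by norm_num)
    (fun s => 1 + (s/2 - s^2/12 + s^3/24 - 19/720*s^4 + 1/100*s^5))
    (fun s => 1/2 - s/6 + s^2/8 - 19/180*s^3 + 1/20*s^4) ?_ pos ?_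
  · have h := this ⟨le_rfl, by norm_num⟩ ⟨h0.le, h1⟩ h0.le
    simp only [add_zero, Real.log_one, zero_div, sub_zero, mul_zero] at h
    have hp := pos s ⟨h0.le, h1⟩
    have hl : 0 < Real.log (1 + s) := Real.log_pos (by linarith)
    have h3 := one_div_le_one_div_of_le hl (show Real.log (1 + s) ≤ s / (1 + (s/2 - s^2/12 + s^3/24 - 19/720*s^4 + 1/100*s^5)) by linarith)
    unfold gg
    rw [one_div_div] at h3
    have : (1 + (s/2 - s^2/12 + s^3/24 - 19/720*s^4 + 1/100*s^5)) / s - 1 / (1 + s - 1)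
      = 1/2 - s/12 + s^2/24 - 19/720*s^3 + 1/100*s^4 := by
      rw [add_sub_cancel_left]; field_simp; ring
    linarith
  · intro s
    have h2 := (((((hasDerivAt_id s).div_const 2).sub ((hasDerivAt_pow 2 s).div_const 12)).add
      ((hasDerivAt_pow 3 s).div_const 24)).sub ((hasDerivAt_pow 4 s).const_mul (19/720))).add
      ((hasDerivAt_pow 5 s).const_mul (1/100))
    refine HasDerivAt.congr_deriv (h2.const_add 1) ?_
    norm_num; ring
  · rintro s ⟨h0, h1⟩
    have : -1 * ((1 + (s/2 - s^2/12 + s^3/24 - 19/720*s^4 + 1/100*s^5)) ^ 2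
      - (1 + s) * ((1 + (s/2 - s^2/12 + s^3/24 - 19/720*s^4 + 1/100*s^5))
      - s * (1/2 - s/6 + s^2/8 - 19/180*s^3 + 1/20*s^4)))
      = s^5 * ((21/400 - 97/1728 * s - 793/518400*s^3) + 167/43200*s^2 + s^4*(19/36000 - 1/10000*s)) := by ring
    rw [this]
    have h3 : s^3 ≤ 1 := pow_le_one₀ h0 (by linarith)
    have : 0 ≤ 21/400 - 97/1728 * s - 793/518400*s^3 := by linarith
    have : 0 ≤ 19/36000 - 1/10000*s := by linarith
    positivity

lemma gg_neg_lo {t : ℝ} (h0 : 0 < t) (h1 : t < 1) : 1/2 + (1-t)/12 ≤ gg t := by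
  obtain ⟨s, rfl⟩ : ∃ s, t = 1 + s := ⟨t - 1, by ring⟩
  have hs : s < 0 := by linarith
  have pos : ∀ u ∈ Icc s 0, 0 < 1 + (u/2 - u^2/12) := by
    rintro u ⟨h2, h3⟩
    nlinarith
  have := pade_mono s 0 1 (by linarith)
    (fun s => 1 + (s/2 - s^2/12)) (fun s => 1/2 - s/6) ?_ pos ?_
  · have h := this ⟨le_rfl, hs.le⟩ ⟨hs.le, le_rfl⟩ hs.le
    simp only [one_mul, add_zero, Real.log_one, zero_div, sub_zero] at h
    have hp := pos s ⟨le_rfl, hs.le⟩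
    have hl : s / (1 + (s/2 - s^2/12)) < 0 := div_neg_of_neg_of_pos hs hp
    have h3 := one_div_le_one_div_of_neg_of_le hl (show Real.log (1 + s) ≤ _ by linarith)
    unfold gg
    rw [one_div_div] at h3
    have : (1 + (s/2 - s^2/12)) / s - 1 / (1 + s - 1) = 1/2 + (1 - (1+s))/12 := by
      have := hs.ne
      rw [add_sub_cancel_left]; field_simp; ring
    linarith
  · intro s
    have h2 := (((hasDerivAt_id s).div_const 2).sub ((hasDerivAt_pow 2 s).div_const 12))
    refine HasDerivAt.congr_deriv (h2.const_add 1) ?_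
    norm_num; ring
  · rintro u ⟨h2, h3⟩
    have : 1 * ((1 + (u/2 - u^2/12)) ^ 2 - (1 + u) * ((1 + (u/2 - u^2/12)) - u * (1/2 - u/6)))
      = u^2 * (-u) * (1/6 - u / 144) := by ring
    rw [this]
    have : 0 ≤ -u := by linarith
    have : 0 ≤ 1/6 - u/144 := by linarith
    positivity

lemma gg_neg_up {t : ℝ} (h0 : 0 < t) (h1 : t < 1) :
    gg t ≤ 1/2 + (1-t)/12 + 5/12*(1-t)^2 := by
  obtain ⟨s, rfl⟩ : ∃ s, t = 1 + s := ⟨t - 1, by ring⟩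
  have hs : s < 0 := by linarith
  have pos : ∀ u ∈ Icc s 0, 0 < 1 + (u/2 - u^2/12 + 5/12*u^3) := by
    rintro u ⟨h2, h3⟩
    have e : 1 + (u/2 - u^2/12 + 5/12*u^3) = (1 + u) * (1 - u/2 + 5/12*u^2) := by ring
    rw [e]
    have : 0 < 1 + u := by linarith
    have : 0 < 1 - u/2 := by linarith
    positivity
  have := pade_mono s 0 (-1) (by linarith)
    (fun s => 1 + (s/2 - s^2/12 + 5/12*s^3)) (fun s => 1/2 - s/6 + 5/4*s^2) ?_ pos ?_
  · have h := this ⟨le_rfl, hs.le⟩ ⟨hs.le, le_rfl⟩ hs.le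
    simp only [add_zero, Real.log_one, zero_div, sub_zero, mul_zero] at h
    have hp := pos s ⟨le_rfl, hs.le⟩
    have hl : Real.log (1 + s) < 0 := Real.log_neg h0 h1
    have h3 := one_div_le_one_div_of_neg_of_le hl (show s / (1 + (s/2 - s^2/12 + 5/12*s^3)) ≤ _ by linarith)
    unfold gg
    rw [one_div_div] at h3
    have : (1 + (s/2 - s^2/12 + 5/12*s^3)) / s - 1 / (1 + s - 1)
        = 1/2 + (1 - (1+s))/12 + 5/12*(1-(1+s))^2 := by
      have := hs.ne
      rw [add_sub_cancel_left]; field_simp; ring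
    linarith
  · intro s
    have h2 := (((hasDerivAt_id s).div_const 2).sub ((hasDerivAt_pow 2 s).div_const 12)).add
      ((hasDerivAt_pow 3 s).const_mul (5/12))
    refine HasDerivAt.congr_deriv (h2.const_add 1) ?_
    norm_num; ring
  · rintro u ⟨h2, h3⟩
    have : -1 * ((1 + (u/2 - u^2/12 + 5/12*u^3)) ^ 2
        - (1 + u) * ((1 + (u/2 - u^2/12 + 5/12*u^3)) - u * (1/2 - u/6 + 5/4*u^2)))
      = u^2 * (-u) * ((1 + u) * (3/2 - 35/144*u + 25/144*u^2)) := by ring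
    rw [this]
    have : 0 ≤ -u := by linarith
    have : 0 ≤ 1 + u := by linarith
    have : 0 ≤ 3/2 - 35/144*u := by linarith
    positivity

lemma frullani : ∫ t in (0:ℝ)..1, (t^31 - 1) / Real.log t = Real.log 32 := by
  have hint : Integrable (Function.uncurry fun (t s : ℝ) => t ^ s)
      ((volume.restrict (Ioc (0:ℝ) 1)).prod (volume.restrict (Ioc (0:ℝ) 31))) := by
    rw [Measure.prod_restrict]
    refine Measure.integrableOn_of_bounded (M := 1) ?_ ?_ ?_
    · rw [Measure.prod_prod]; simp
    · apply Measurable.aestronglyMeasurable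
      exact measurable_fst.pow measurable_snd
    · refine (ae_restrict_iff' (measurableSet_Ioc.prod measurableSet_Ioc)).2 (ae_of_all _ ?_)
      rintro ⟨t, s⟩ ⟨ht, hs⟩
      simp only [Function.uncurry]
      rw [Real.norm_eq_abs, abs_of_nonneg (Real.rpow_nonneg ht.1.le _)]
      exact Real.rpow_le_one ht.1.le ht.2 hs.1.le
  have sw := integral_integral_swap hint
  have h1 : ∀ t ∈ Ioc (0:ℝ) 1, t ≠ 1 →
      ∫ s in Ioc (0:ℝ) 31, t ^ s = (t^31 - 1) / Real.log t := by
    intro t ht h1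
    have hl : Real.log t ≠ 0 := (Real.log_neg ht.1 (lt_of_le_of_ne ht.2 h1)).ne
    rw [← intervalIntegral.integral_of_le (by norm_num)]
    rw [intervalIntegral.integral_eq_sub_of_hasDerivAt (f := fun s => t ^ s / Real.log t)]
    · have : t ^ (31:ℝ) = t ^ 31 := by exact_mod_cast Real.rpow_natCast t 31
      simp only [this, Real.rpow_zero]; ring
    · intro s _
      have := ((hasDerivAt_id s).const_rpow (a := t) ht.1).div_const (Real.log t)
      refine HasDerivAt.congr_deriv this ?_
      simp; field_simp
    · apply Continuous.intervalIntegrable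
      exact Real.continuous_const_rpow ht.1.ne'
  have h2 : ∀ s ∈ Ioc (0:ℝ) 31, ∫ t in Ioc (0:ℝ) 1, t ^ s = 1 / (s + 1) := by
    intro s hs
    rw [← intervalIntegral.integral_of_le (by norm_num), integral_rpow (Or.inl (by linarith [hs.1]))]
    rw [Real.one_rpow, Real.zero_rpow (by linarith [hs.1])]; simp
  rw [setIntegral_congr_fun measurableSet_Ioc h2] at sw
  rw [intervalIntegral.integral_of_le (by norm_num)]
  have h3 : ∫ t in Ioc (0:ℝ) 1, (t^31 - 1) / Real.log t
      = ∫ t in Ioc (0:ℝ) 1, ∫ s in Ioc (0:ℝ) 31, t ^ s := by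
    apply setIntegral_congr_ae measurableSet_Ioc
    filter_upwards [compl_mem_ae_iff.2 (measure_singleton (μ := volume) (1:ℝ))] with t ht ht2
    exact (h1 t ht2 ht).symm
  rw [h3, sw, ← intervalIntegral.integral_of_le (by norm_num)]
  rw [intervalIntegral.integral_eq_sub_of_hasDerivAt (f := fun s => Real.log (s + 1))]
  · norm_num
  · intro s hs
    rw [uIcc_of_le (by norm_num)] at hs
    exact HasDerivAt.log ((hasDerivAt_id s).add_const 1) (by simp; linarith [hs.1])
  · apply ContinuousOn.intervalIntegrable
    apply ContinuousOn.div continuousOn_const (by fun_prop)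
    intro s hs
    rw [uIcc_of_le (by norm_num)] at hs
    linarith [hs.1]

lemma gg_pow_int : IntervalIntegrable (fun t => t^31 * gg t) volume 0 1 :=
  (gg_int le_rfl zero_le_one).continuousOn_mul (by fun_prop)

lemma gg01 : ∫ t in (0:ℝ)..1, gg t
    = (∑ k ∈ Finset.range 31, 1 / ((k:ℝ) + 1)) - Real.log 32 + ∫ t in (0:ℝ)..1, t^31 * gg t := by
  have hg := gg_int le_rfl zero_le_one
  have hs : IntervalIntegrable (fun t : ℝ => ∑ k ∈ Finset.range 31, t^k) volume 0 1 := by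
    apply Continuous.intervalIntegrable; fun_prop
  have e : ∀ t ∈ uIoc (0:ℝ) 1, t ≠ 1 → (t^31 - 1) / Real.log t
      = (∑ k ∈ Finset.range 31, t^k) - (gg t - t^31 * gg t) := by
    intro t ht h1
    rw [uIoc_of_le zero_le_one] at ht
    have hl : Real.log t ≠ 0 := (Real.log_neg ht.1 (lt_of_le_of_ne ht.2 h1)).ne
    have : t - 1 ≠ 0 := sub_ne_zero.2 h1
    rw [geom_sum_eq h1]
    unfold gg
    field_simp
    ring
  have h : ∫ t in (0:ℝ)..1, (t^31 - 1) / Real.log t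
      = ∫ t in (0:ℝ)..1, ((∑ k ∈ Finset.range 31, t^k) - (gg t - t^31 * gg t)) := by
    apply intervalIntegral.integral_congr_ae
    filter_upwards [compl_mem_ae_iff.2 (measure_singleton (μ := volume) (1:ℝ))] with t ht ht2
    exact e t ht2 ht
  rw [frullani, intervalIntegral.integral_sub hs (hg.sub gg_pow_int),
    intervalIntegral.integral_sub hg gg_pow_int, intervalIntegral.integral_finsetSum] at h
  · have h4 : ∀ k ∈ Finset.range 31, ∫ t in (0:ℝ)..1, t^k = 1 / ((k:ℝ) + 1) := by
      intro k _; rw [integral_pow]; simp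
    rw [Finset.sum_congr rfl h4] at h
    linarith
  · intro k _; apply Continuous.intervalIntegrable; fun_prop

lemma pw_lo : 1/64 + 1/(12*32*33) ≤ ∫ t in (0:ℝ)..1, t^31 * gg t := by
  have h : ∫ t in (0:ℝ)..1, (7/12 * t^31 - 1/12 * t^32) ≤ ∫ t in (0:ℝ)..1, t^31 * gg t := by
    apply intervalIntegral.integral_mono_on_of_le_Ioo zero_le_one _ gg_pow_int
    · rintro t ⟨h0, h1⟩
      have := mul_le_mul_of_nonneg_left (gg_neg_lo h0 h1) (pow_nonneg h0.le 31)
      refine le_trans (le_of_eq ?_) this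
      ring
    · apply Continuous.intervalIntegrable; fun_prop
  rw [intervalIntegral.integral_sub (by apply Continuous.intervalIntegrable; fun_prop)
    (by apply Continuous.intervalIntegrable; fun_prop), intervalIntegral.integral_const_mul,
    intervalIntegral.integral_const_mul, integral_pow, integral_pow] at h
  norm_num at h ⊢
  linarith

lemma pw_up : ∫ t in (0:ℝ)..1, t^31 * gg t ≤ 1/64 + 1/(12*32*33) + 5/12 * (2/(32*33*34)) := by
  have h : ∫ t in (0:ℝ)..1, t^31 * gg t ≤ ∫ t in (0:ℝ)..1, (t^31 - 11/12 * t^32 + 5/12*t^33) := by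
    apply intervalIntegral.integral_mono_on_of_le_Ioo zero_le_one gg_pow_int
    · apply Continuous.intervalIntegrable; fun_prop
    · rintro t ⟨h0, h1⟩
      have := mul_le_mul_of_nonneg_left (gg_neg_up h0 h1) (pow_nonneg h0.le 31)
      refine le_trans this (le_of_eq ?_)
      ring
  rw [intervalIntegral.integral_add (by apply Continuous.intervalIntegrable; fun_prop)
    (by apply Continuous.intervalIntegrable; fun_prop),
    intervalIntegral.integral_sub (by apply Continuous.intervalIntegrable; fun_prop)
    (by apply Continuous.intervalIntegrable; fun_prop), intervalIntegral.integral_const_mul,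
    intervalIntegral.integral_const_mul, integral_pow, integral_pow, integral_pow] at h
  norm_num at h ⊢
  linarith

lemma poly_int (c b : ℝ) :
    ∫ s in (0:ℝ)..b, (1/2 - s/12 + s^2/24 - 19/720*s^3 + c*s^4)
      = b/2 - b^2/24 + b^3/72 - 19/2880*b^4 + c*b^5/5 := by
  rw [intervalIntegral.integral_eq_sub_of_hasDerivAt
    (f := fun b => b/2 - b^2/24 + b^3/72 - 19/2880*b^4 + c*b^5/5)]
  · simp
  · intro s _
    have h2 := (((((hasDerivAt_id s).div_const 2).sub ((hasDerivAt_pow 2 s).div_const 24)).add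
      ((hasDerivAt_pow 3 s).div_const 72)).sub ((hasDerivAt_pow 4 s).const_mul (19/2880))).add
      (((hasDerivAt_pow 5 s).const_mul c).div_const 5)
    refine HasDerivAt.congr_deriv h2 ?_
    norm_num; ring
  · apply Continuous.intervalIntegrable; fun_prop

lemma shift (b : ℝ) : ∫ t in (1:ℝ)..(1+b), gg t = ∫ s in (0:ℝ)..b, gg (1 + s) := by
  rw [intervalIntegral.integral_comp_add_left (fun t => gg t)]; simp

lemma shift_int {b : ℝ} (hb : 0 ≤ b) : IntervalIntegrable (fun s => gg (1 + s)) volume 0 b := by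
  have := (gg_int zero_le_one (show 0 ≤ 1 + b by linarith)).comp_add_left 1
  simpa using this

lemma log32 : Real.log 32 = 5 * Real.log 2 := by
  rw [show (32:ℝ) = 2^5 by norm_num, Real.log_pow]; norm_num

lemma FF_split (b : ℝ) (hb : 0 ≤ b) : FF (1 + b) = Real.log b
    + ((∑ k ∈ Finset.range 31, 1 / ((k:ℝ) + 1)) - 5 * Real.log 2 + ∫ t in (0:ℝ)..1, t^31 * gg t)
    + ∫ s in (0:ℝ)..b, gg (1 + s) := by
  have e := intervalIntegral.integral_add_adjacent_intervals
        (gg_int (le_refl 0) zero_le_one)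
        (gg_int zero_le_one (show 0 ≤ 1 + b by linarith))
  unfold FF
  rw [← e, gg01, shift, log32, add_sub_cancel_left]; ring

lemma FF_neg : FF 1.4513 < 0 := by
  rw [show (1.4513:ℝ) = 1 + 0.4513 by norm_num, FF_split _ (by norm_num)]
  have h1 : ∫ s in (0:ℝ)..0.4513, gg (1 + s)
      ≤ ∫ s in (0:ℝ)..0.4513, (1/2 - s/12 + s^2/24 - 19/720*s^3 + 3/160*s^4) := by
    apply intervalIntegral.integral_mono_on_of_le_Ioo (by norm_num) (shift_int (by norm_num))
    · apply Continuous.intervalIntegrable; fun_prop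
    · rintro s ⟨h0, h1⟩
      exact gg_up h0 (h1.le.trans (by norm_num))
  rw [poly_int] at h1
  have h2 := pw_up
  have h3 := Real.log_two_gt_d9
  have h4 : Real.log 0.4513 = Real.log (1 - 0.0974) - Real.log 2 := by
    rw [← Real.log_div (by norm_num) (by norm_num)]; norm_num
  have h5 := Real.abs_log_sub_add_sum_range_le (x := 0.0974) (by norm_num [abs_lt]) 5
  rw [abs_le] at h5
  have h6 := h5.2
  rw [abs_of_pos (by norm_num)] at h6
  rw [h4]
  simp only [Finset.sum_range_succ, Finset.sum_range_zero] at h6 ⊢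
  generalize Real.log (1 - 0.0974) = y at *
  norm_num at h1 h2 h3 h6 ⊢
  linarith

lemma FF_pos : 0 < FF 1.4514 := by
  rw [show (1.4514:ℝ) = 1 + 0.4514 by norm_num, FF_split _ (by norm_num)]
  have h1 : ∫ s in (0:ℝ)..0.4514, (1/2 - s/12 + s^2/24 - 19/720*s^3 + 1/100*s^4)
      ≤ ∫ s in (0:ℝ)..0.4514, gg (1 + s) := by
    apply intervalIntegral.integral_mono_on_of_le_Ioo (by norm_num) _ (shift_int (by norm_num))
    · rintro s ⟨h0, h1⟩
      exact gg_lo h0 (h1.le.trans (by norm_num))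
    · apply Continuous.intervalIntegrable; fun_prop
  rw [poly_int] at h1
  have h2 := pw_lo
  have h3 := Real.log_two_lt_d9
  have h4 : Real.log 0.4514 = Real.log (1 - 0.0972) - Real.log 2 := by
    rw [← Real.log_div (by norm_num) (by norm_num)]; norm_num
  have h5 := Real.abs_log_sub_add_sum_range_le (x := 0.0972) (by norm_num [abs_lt]) 5
  rw [abs_le] at h5
  have h6 := h5.1
  rw [abs_of_pos (by norm_num)] at h6
  rw [h4]
  simp only [Finset.sum_range_succ, Finset.sum_range_zero] at h6 ⊢
  generalize Real.log (1 - 0.0972) = y at *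
  norm_num at h1 h2 h3 h6 ⊢
  linarith

theorem soldner_constant :
    ∃ μ : ℝ, 1 < μ ∧ IsLi μ 0 ∧ 1.4513 < μ ∧ μ < 1.4514 ∧
      ∀ μ' : ℝ, 1 < μ' → IsLi μ' 0 → μ' = μ := by
  obtain ⟨μ, hμ, h0⟩ := intermediate_value_Ioo (by norm_num) FF_cont ⟨FF_neg, FF_pos⟩
  have h1 : 1 < μ := lt_trans (by norm_num) hμ.1
  refine ⟨μ, h1, h0 ▸ isLi_FF h1, hμ.1, hμ.2, ?_⟩
  intro ν hν h
  have h2 : FF ν = 0 := tendsto_nhds_unique (isLi_FF hν) h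
  rcases lt_trichotomy ν μ with h3 | h3 | h3
  · linarith [FF_mono hν h3]
  · exact h3
  · linarith [FF_mono h1 h3]
end

section
/- The infinite product ∏_{p prime, p>2} (1 − 1/(p−1)²) over all odd primes converges to a positive real number, and the twin prime constant C₂ = 2·∏_{p prime, p>2} (1 − 1/(p−1)²) satisfies 1.32032 < C₂ < 1.32033. -/
open Real Filter Set

namespace TPC

/-- Trial division test. -/
def tst (n : ℕ) : Bool := (List.range 29).all fun k => n ≤ k + 2 || n % (k + 2) != 0

def num : ℕ → ℕ
  | 0 => 1
  | n + 1 => if 2 < n ∧ tst n = true then num n * (n ^ 3 * (n - 2)) else num n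

def den : ℕ → ℕ
  | 0 => 1
  | n + 1 => if 2 < n ∧ tst n = true then den n * ((n - 1) ^ 3 * (n + 1)) else den n

theorem tst_iff (n : ℕ) (h2 : 2 < n) (h : n < 900) : tst n = true ↔ n.Prime := by
  rw [Nat.prime_def_le_sqrt]
  simp only [tst, List.all_eq_true, List.mem_range, Bool.or_eq_true, decide_eq_true_eq, bne_iff_ne]
  constructor
  · intro H
    refine ⟨h2.le, fun m hm hs hd => ?_⟩
    have h1 : m * m ≤ n := Nat.le_sqrt.1 hs
    have h3 : m < 30 := by nlinarith
    have := H (m - 2) (by omega)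
    rw [Nat.sub_add_cancel hm] at this
    rcases this with h | h
    · nlinarith
    · exact h (Nat.mod_eq_zero_of_dvd hd)
  · intro H k hk
    have hp := Nat.prime_def_le_sqrt.2 H
    by_contra hc
    push Not at hc
    have hd := Nat.dvd_of_mod_eq_zero hc.2
    rcases (Nat.dvd_prime hp).1 hd with h | h <;> omega

noncomputable def b (n : ℕ) : ℝ :=
  if n.Prime ∧ 2 < n then 1 - (2 * n - 1) / (((n : ℝ) - 1) ^ 3 * (n + 1)) else 1

noncomputable def B (N : ℕ) : ℝ := ∏ n ∈ Finset.range N, b n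

theorem B_succ (N : ℕ) : B (N + 1) = B N * b N := Finset.prod_range_succ _ _

theorem eps_bd (n : ℕ) (h : 2 < n) :
    0 ≤ (2 * n - 1) / (((n : ℝ) - 1) ^ 3 * (n + 1)) ∧
    (2 * n - 1) / (((n : ℝ) - 1) ^ 3 * (n + 1)) ≤ 1 / ((n : ℝ) - 2) ^ 2 - 1 / ((n : ℝ) - 1) ^ 2 ∧
    (2 * n - 1) / (((n : ℝ) - 1) ^ 3 * (n + 1)) ≤ 1 := by
  obtain ⟨k, rfl⟩ := Nat.exists_eq_add_of_lt h
  push_cast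
  have hk : (0 : ℝ) ≤ k := k.cast_nonneg
  have e1 : (2 + k + 1 - 1 : ℝ) = k + 2 := by ring
  have e2 : (2 + k + 1 - 2 : ℝ) = k + 1 := by ring
  rw [e1, e2]
  refine ⟨?_, ?_, ?_⟩
  · apply div_nonneg _ (by positivity)
    linarith
  · rw [div_sub_div _ _ (by positivity) (by positivity), div_le_div_iff₀ (by positivity) (by positivity)]
    rw [← sub_nonneg]
    ring_nf
    positivity
  · rw [div_le_one (by positivity)]
    nlinarith [mul_nonneg hk hk, pow_nonneg hk 3, pow_nonneg hk 4]

theorem b_mem (n : ℕ) : 0 ≤ b n ∧ b n ≤ 1 := by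
  unfold b
  split_ifs with h
  · have := eps_bd n h.2
    constructor <;> linarith
  · simp

theorem B_mem (n : ℕ) : 0 ≤ B n ∧ B n ≤ 1 :=
  ⟨Finset.prod_nonneg fun i _ => (b_mem i).1, Finset.prod_le_one (fun i _ => (b_mem i).1) fun i _ => (b_mem i).2⟩

theorem B_anti : Antitone B := antitone_nat_of_succ_le fun n => by
  rw [B_succ]
  exact mul_le_of_le_one_right (B_mem n).1 (b_mem n).2

theorem D_step (n : ℕ) (h : 2 < n) :
    B n - 1 / ((n : ℝ) - 2) ^ 2 ≤ B (n + 1) - 1 / ((n : ℝ) - 1) ^ 2 := by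
  have hb := B_mem n
  have he := eps_bd n h
  rw [B_succ]
  unfold b
  split_ifs with hp
  · nlinarith
  · linarith

theorem D_mono (M : ℕ) (hM : 2 < M) (k : ℕ) :
    B M - 1 / ((M : ℝ) - 2) ^ 2 ≤ B (M + k) := by
  have : B M - 1 / ((M : ℝ) - 2) ^ 2 ≤ B (M + k) - 1 / (((M + k : ℕ) : ℝ) - 2) ^ 2 := by
    induction k with
    | zero => simp
    | succ k ih =>
      refine ih.trans ((D_step (M + k) (by omega)).trans (le_of_eq ?_))
      rw [← add_assoc]
      push_cast
      ring
  have h2 : 0 ≤ 1 / (((M + k : ℕ) : ℝ) - 2) ^ 2 := by positivity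
  linarith

theorem den_pos (N : ℕ) : 0 < den N := by
  induction N with
  | zero => simp [den]
  | succ n ih =>
    unfold den
    split_ifs with h
    · have : 0 < n - 1 := by omega
      positivity
    · exact ih

theorem B_eq (N : ℕ) (hN : N ≤ 900) : B N * den N = num N := by
  induction N with
  | zero => simp [den, num, B]
  | succ n ih =>
    have ih := ih (by omega)
    rw [B_succ]
    unfold den num b
    by_cases h2 : 2 < n
    · have ht := tst_iff n h2 (by omega)
      simp only [h2, ht, true_and, and_true]
      split_ifs with hp
      · obtain ⟨k, rfl⟩ := Nat.exists_eq_add_of_lt h2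
        have a1 : 2 + k + 1 - 1 = k + 2 := by omega
        have a2 : 2 + k + 1 - 2 = k + 1 := by omega
        rw [a1, a2]
        push_cast
        rw [← ih]
        have e1 : (2 + k + 1 - 1 : ℝ) = k + 2 := by ring
        rw [e1]
        have : (k + 2 : ℝ) ≠ 0 := by positivity
        have : (2 + k + 1 + 1 : ℝ) ≠ 0 := by positivity
        field_simp
        ring
      · simpa using ih
    · simp only [h2, false_and, and_false, if_false, mul_one]
      exact ih

set_option maxRecDepth 100000 in
theorem num_lt : num 800 * 10 ^ 8 < 81444230 * den 800 := by decide +kernel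

set_option maxRecDepth 100000 in
theorem lt_num : 81444210 * den 800 < num 800 * 10 ^ 8 := by decide +kernel

noncomputable def a (n : ℕ) : ℝ := 1 - 1 / ((n : ℝ) - 1) ^ 2

noncomputable def z (n : ℕ) : ℝ := if n.Prime then (1 - ((n : ℝ) ^ 2)⁻¹)⁻¹ else 1

theorem z_tendsto : Tendsto (fun N => ∏ n ∈ Finset.range N, z n) atTop (nhds (π ^ 2 / 6)) := by
  let f : ℕ →*₀ ℝ :=
    { toFun := fun n => ((n : ℝ) ^ 2)⁻¹
      map_zero' := by simp
      map_one' := by simp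
      map_mul' := fun x y => by push_cast; rw [mul_pow, mul_inv] }
  have hs := hasSum_zeta_two
  have hs' : HasSum (fun n => f n) (π ^ 2 / 6) := by simpa [f] using hs
  have := EulerProduct.eulerProduct_completely_multiplicative (f := f) hs'.summable.norm
  rw [hs'.tsum_eq] at this
  refine this.congr fun N => ?_
  rw [Nat.primesBelow, Finset.prod_filter]
  rfl

theorem a_mul : Multipliable (fun p : {p : ℕ // p.Prime ∧ 2 < p} => a p) := by
  have hs : Summable (fun n : ℕ => 1 / ((n : ℝ) - 1) ^ 2) := by
    rw [← summable_nat_add_iff 1]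
    simpa using Real.summable_one_div_nat_pow.2 (one_lt_two)
  have h2 : Summable (fun p : {p : ℕ // p.Prime ∧ 2 < p} => 1 / ((p : ℕ) - 1 : ℝ) ^ 2) :=
    hs.comp_injective Subtype.val_injective
  have := multipliable_one_add_of_summable (f := fun p : {p : ℕ // p.Prime ∧ 2 < p} => -(1 / ((p : ℕ) - 1 : ℝ) ^ 2)) (by simpa using h2)
  simp only [← sub_eq_add_neg] at this
  exact this

theorem a_tendsto : Tendsto (fun N => ∏ n ∈ Finset.range N, if n.Prime ∧ 2 < n then a n else 1) atTop
    (nhds (∏' p : {p : ℕ // p.Prime ∧ 2 < p}, a p)) := by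
  have h := a_mul.hasProd
  have h2 := (hasProd_subtype_iff_mulIndicator (s := {p : ℕ | p.Prime ∧ 2 < p}) (f := a)).1 h
  refine h2.tendsto_prod_nat.congr fun N => Finset.prod_congr rfl fun n _ => ?_
  simp [Set.mulIndicator_apply]

theorem azb (n : ℕ) (h : n ≠ 2) : (if n.Prime ∧ 2 < n then a n else 1) * z n = b n := by
  unfold z b a
  by_cases hp : n.Prime
  · have h2 : 2 < n := lt_of_le_of_ne hp.two_le h.symm
    simp only [hp, h2, and_self, if_true]
    obtain ⟨k, rfl⟩ := Nat.exists_eq_add_of_lt h2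
    push_cast
    have e1 : (2 + k + 1 - 1 : ℝ) = k + 2 := by ring
    rw [e1]
    have h1 : (k + 2 : ℝ) ≠ 0 := by positivity
    have h3 : (2 + k + 1 + 1 : ℝ) ≠ 0 := by positivity
    have h4 : (2 + k + 1 : ℝ) ≠ 0 := by positivity
    have h5 : (1 - ((2 + k + 1 : ℝ) ^ 2)⁻¹) = (k + 2) * (2 + k + 1 + 1) / (2 + k + 1) ^ 2 := by
      field_simp
      ring
    rw [h5]
    field_simp
    ring
  · simp [hp]

theorem AZB (k : ℕ) : (∏ n ∈ Finset.range (3 + k), if n.Prime ∧ 2 < n then a n else 1) *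
    ∏ n ∈ Finset.range (3 + k), z n = 4 / 3 * B (3 + k) := by
  induction k with
  | zero =>
    simp [Finset.prod_range_succ, B, z, b, Nat.prime_two, Nat.not_prime_zero, Nat.not_prime_one]
    norm_num
  | succ k ih =>
    rw [← add_assoc, Finset.prod_range_succ, Finset.prod_range_succ, B_succ, ← azb _ (by omega),
      mul_mul_mul_comm, ih]
    ring

theorem main : 1.32032 < 2 * ∏' p : {p : ℕ // p.Prime ∧ 2 < p}, a p ∧
    2 * ∏' p : {p : ℕ // p.Prime ∧ 2 < p}, a p < 1.32033 := by
  set A := ∏' p : {p : ℕ // p.Prime ∧ 2 < p}, a p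
  have ht : Tendsto B atTop (nhds (A * (π ^ 2 / 6) * (3 / 4))) := by
    refine ((a_tendsto.mul z_tendsto).mul_const (3 / 4 : ℝ)).congr' ?_
    filter_upwards [eventually_ge_atTop 3] with N hN
    obtain ⟨k, rfl⟩ := Nat.exists_eq_add_of_le hN
    rw [AZB]
    ring
  have hd : (0 : ℝ) < den 800 := by exact_mod_cast den_pos 800
  have hB := B_eq 800 (by norm_num)
  have n1 : (num 800 : ℝ) * 10 ^ 8 < 81444230 * den 800 := by exact_mod_cast num_lt
  have n2 : 81444210 * (den 800 : ℝ) < num 800 * 10 ^ 8 := by exact_mod_cast lt_num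
  rw [← hB] at n1 n2
  have b1 : B 800 * 10 ^ 8 < 81444230 := by
    by_contra! hc
    nlinarith
  have b2 : 81444210 < B 800 * 10 ^ 8 := by
    by_contra! hc
    nlinarith
  have u := le_of_tendsto ht (eventually_atTop.2 ⟨800, fun N hN => B_anti hN⟩)
  have l := ge_of_tendsto ht (eventually_atTop.2 ⟨800, fun N hN => by
    obtain ⟨k, rfl⟩ := Nat.exists_eq_add_of_le hN
    exact D_mono 800 (by norm_num) k⟩)
  norm_num at l
  have p1 := Real.pi_gt_d20
  have p2 := Real.pi_lt_d20
  have q1 : 9.8696043 < π ^ 2 := by nlinarith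
  have q2 : π ^ 2 < 9.8696046 := by nlinarith
  constructor
  · by_contra! hc
    nlinarith
  · by_contra! hc
    nlinarith

end TPC

open Real Filter Set

/-- The infinite product `∏_{p prime, p>2} (1 − 1/(p−1)²)` converges to a positive real
number, and the twin prime constant `C₂ = 2·∏_{p prime, p>2} (1 − 1/(p−1)²)` satisfies
`1.32032 < C₂ < 1.32033`. -/
theorem twin_prime_constant_bounds :
    Multipliable (fun p : {p : ℕ // p.Prime ∧ 2 < p} => 1 - 1 / (((p : ℕ) : ℝ) - 1) ^ 2) ∧
    0 < ∏' p : {p : ℕ // p.Prime ∧ 2 < p}, (1 - 1 / (((p : ℕ) : ℝ) - 1) ^ 2) ∧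
    1.32032 < 2 * ∏' p : {p : ℕ // p.Prime ∧ 2 < p}, (1 - 1 / (((p : ℕ) : ℝ) - 1) ^ 2) ∧
    2 * ∏' p : {p : ℕ // p.Prime ∧ 2 < p}, (1 - 1 / (((p : ℕ) : ℝ) - 1) ^ 2) < 1.32033 := by
  have h := TPC.main
  refine ⟨TPC.a_mul, ?_, h.1, h.2⟩
  have h1 := h.1
  change 0 < ∏' p : {p : ℕ // p.Prime ∧ 2 < p}, TPC.a p
  norm_num at h1 ⊢
  linarith
end
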